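/- The image under ι of the center of H equals the Z[q]-subalgebra of H_{Z[q^{±1}]} generated by σ_3, σ_3^{-1}, qσ_1 and qσ_2, where σ_1 = Y_1 + Y_2 + Y_3, σ_2 = Y_1Y_2 + Y_2Y_3 + Y_1Y_3 and σ_3 = Y_1Y_2Y_3. -/

import Mathlib

/-- The defining relations of the affine Hecke algebra of type `A_2` (for `Gl_3`),
on the free algebra on four generators `T = X 0`, `T⁻¹ = X 1`, `S_1 = X 2`, `S_2 = X 3`. -/
inductive HeckeRel (R : Type) [CommRing R] (q : R) :
    FreeAlgebra R (Fin 4) → FreeAlgebra R (Fin 4) → Prop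
  | TTinv : HeckeRel R q (FreeAlgebra.ι R 0 * FreeAlgebra.ι R 1) 1
  | TinvT : HeckeRel R q (FreeAlgebra.ι R 1 * FreeAlgebra.ι R 0) 1
  | quad : HeckeRel R q
      ((FreeAlgebra.ι R 2 + 1) * (FreeAlgebra.ι R 2 - algebraMap R (FreeAlgebra R (Fin 4)) q)) 0
  | T3S1 : HeckeRel R q (FreeAlgebra.ι R 0 ^ 3 * FreeAlgebra.ι R 2)
      (FreeAlgebra.ι R 2 * FreeAlgebra.ι R 0 ^ 3)
  | braid : HeckeRel R q (FreeAlgebra.ι R 2 * FreeAlgebra.ι R 3 * FreeAlgebra.ι R 2)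
      (FreeAlgebra.ι R 3 * FreeAlgebra.ι R 2 * FreeAlgebra.ι R 3)
  | TS2 : HeckeRel R q (FreeAlgebra.ι R 0 * FreeAlgebra.ι R 3)
      (FreeAlgebra.ι R 2 * FreeAlgebra.ι R 0)

/-- The affine Hecke algebra `H_R` with parameter `q ∈ R`. -/
abbrev HeckeAlg (R : Type) [CommRing R] (q : R) := RingQuot (HeckeRel R q)

namespace HeckeAlg

variable (R : Type) [CommRing R] (q : R)

noncomputable def gen (i : Fin 4) : HeckeAlg R q :=
  RingQuot.mkAlgHom R (HeckeRel R q) (FreeAlgebra.ι R i)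

noncomputable def T : HeckeAlg R q := gen R q 0
noncomputable def Tinv : HeckeAlg R q := gen R q 1
noncomputable def S1 : HeckeAlg R q := gen R q 2
noncomputable def S2 : HeckeAlg R q := gen R q 3

theorem T_mul_Tinv : T R q * Tinv R q = 1 := by
  simpa [T, Tinv, gen, map_mul, map_one] using
    RingQuot.mkAlgHom_rel R (HeckeRel.TTinv (R := R) (q := q))

theorem Tinv_mul_T : Tinv R q * T R q = 1 := by
  simpa [T, Tinv, gen, map_mul, map_one] using
    RingQuot.mkAlgHom_rel R (HeckeRel.TinvT (R := R) (q := q))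

theorem quad_rel : (S1 R q + 1) * (S1 R q - algebraMap R (HeckeAlg R q) q) = 0 := by
  simpa [S1, gen, map_mul, map_add, map_sub, map_one, map_zero, AlgHom.commutes] using
    RingQuot.mkAlgHom_rel R (HeckeRel.quad (R := R) (q := q))

theorem T3_mul_S1 : T R q ^ 3 * S1 R q = S1 R q * T R q ^ 3 := by
  simpa [T, S1, gen, map_mul, map_pow] using
    RingQuot.mkAlgHom_rel R (HeckeRel.T3S1 (R := R) (q := q))

theorem braid_rel : S1 R q * S2 R q * S1 R q = S2 R q * S1 R q * S2 R q := by
  simpa [S1, S2, gen, map_mul] using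
    RingQuot.mkAlgHom_rel R (HeckeRel.braid (R := R) (q := q))

theorem T_mul_S2 : T R q * S2 R q = S1 R q * T R q := by
  simpa [T, S1, S2, gen, map_mul] using
    RingQuot.mkAlgHom_rel R (HeckeRel.TS2 (R := R) (q := q))

/-- The canonical (base change) ring homomorphism `H_R → H_S` induced by a ring
homomorphism `R → S` sending the parameter `q` to the parameter `q'`. -/
noncomputable def map {R S : Type} [CommRing R] [CommRing S] (f : R →+* S) (q : R) (q' : S)
    (h : f q = q') : HeckeAlg R q →+* HeckeAlg S q' := by
  subst h
  letI : Algebra R (HeckeAlg S (f q)) :=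
    RingHom.toAlgebra' ((algebraMap S (HeckeAlg S (f q))).comp f)
      (fun c x => by simpa using Algebra.commutes (f c) x)
  refine RingQuot.lift
    ⟨((FreeAlgebra.lift R fun i => gen S (f q) i : _ →ₐ[R] HeckeAlg S (f q)) :
        FreeAlgebra R (Fin 4) →+* HeckeAlg S (f q)), ?_⟩
  have key : ∀ i : Fin 4,
      (FreeAlgebra.lift R fun j => gen S (f q) j) (FreeAlgebra.ι R i) = gen S (f q) i :=
    fun i => FreeAlgebra.lift_ι_apply _ _
  have keyq : (FreeAlgebra.lift R fun j => gen S (f q) j)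
      (algebraMap R (FreeAlgebra R (Fin 4)) q) = algebraMap S (HeckeAlg S (f q)) (f q) := by
    rw [AlgHom.commutes]
    rfl
  intro a b hab
  cases hab with
  | TTinv => simpa [key, T, Tinv] using T_mul_Tinv S (f q)
  | TinvT => simpa [key, T, Tinv] using Tinv_mul_T S (f q)
  | quad => simpa [key, keyq, S1] using quad_rel S (f q)
  | T3S1 => simpa [key, T, S1] using T3_mul_S1 S (f q)
  | braid => simpa [key, S1, S2] using braid_rel S (f q)
  | TS2 => simpa [key, T, S1, S2] using T_mul_S2 S (f q)

/-- `S_1⁻¹ = q⁻¹ (S_1 - q + 1)`, where `qi` is an inverse of `q` in `R`. -/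
noncomputable def S1i (qi : R) : HeckeAlg R q :=
  algebraMap R (HeckeAlg R q) qi * (S1 R q - algebraMap R (HeckeAlg R q) q + 1)

/-- `S_2⁻¹ = q⁻¹ (S_2 - q + 1)`, where `qi` is an inverse of `q` in `R`. -/
noncomputable def S2i (qi : R) : HeckeAlg R q :=
  algebraMap R (HeckeAlg R q) qi * (S2 R q - algebraMap R (HeckeAlg R q) q + 1)

/-- The Bernstein elements `Y_1 = q S_1⁻¹ S_2⁻¹ T`, `Y_2 = S_2⁻¹ T S_1`,
`Y_3 = q⁻¹ T S_1 S_2`, where `qi` is an inverse of `q` in `R`. -/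
noncomputable def Y (qi : R) : Fin 3 → HeckeAlg R q :=
  ![algebraMap R (HeckeAlg R q) q * S1i R q qi * S2i R q qi * T R q,
    S2i R q qi * T R q * S1 R q,
    algebraMap R (HeckeAlg R q) qi * T R q * S1 R q * S2 R q]

end HeckeAlg

noncomputable section

/-- `H`, the affine Hecke algebra over `ℤ[q]` (with `q` an indeterminate). -/
abbrev HPoly : Type := HeckeAlg (Polynomial ℤ) Polynomial.X

/-- `H_{ℤ[q^{±1}]}`, the base change of `H` to the Laurent polynomial ring `ℤ[q,q⁻¹]`. -/
abbrev HLau : Type := HeckeAlg (LaurentPolynomial ℤ) (LaurentPolynomial.T 1)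

/-- The canonical map `ι : H → H_{ℤ[q^{±1}]}`. -/
def ιLau : HPoly →+* HLau :=
  HeckeAlg.map Polynomial.toLaurent Polynomial.X (LaurentPolynomial.T 1) Polynomial.toLaurent_X

/-- The Bernstein elements `Y_1, Y_2, Y_3` of `H_{ℤ[q^{±1}]}`
(where `S_i⁻¹ = q⁻¹(S_i - q + 1)` and `q⁻¹` is the Laurent monomial `T (-1)`). -/
def YLau : Fin 3 → HLau :=
  HeckeAlg.Y (LaurentPolynomial ℤ) (LaurentPolynomial.T 1) (LaurentPolynomial.T (-1))

/-- The image of `q` in `H_{ℤ[q^{±1}]}`. -/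
def qLau : HLau := algebraMap (LaurentPolynomial ℤ) HLau (LaurentPolynomial.T 1)

/-- The image of `q⁻¹` in `H_{ℤ[q^{±1}]}`. -/
def qLauInv : HLau := algebraMap (LaurentPolynomial ℤ) HLau (LaurentPolynomial.T (-1))

/-- The structure map of the `ℤ[q]`-algebra `H_{ℤ[q^{±1}]}`, i.e. `ℤ[q] → ℤ[q,q⁻¹] → H_{ℤ[q^{±1}]}`.
A `ℤ[q]`-subalgebra of `H_{ℤ[q^{±1}]}` is a subring containing the range of this map. -/
def structZq : Polynomial ℤ →+* HLau :=
  (algebraMap (LaurentPolynomial ℤ) HLau).comp Polynomial.toLaurent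

end

/-!
Over a domain in which `q` is invertible the Hecke algebra `H` acts faithfully on the rational
functions in `Y₁, Y₂, Y₃`, with `S₁, S₂` acting by Demazure–Lusztig operators and the `Yᵢ` by
multiplication. An operator commuting with all `Yᵢ` is a multiplication operator, and commuting
with `S₁` and `S₂` makes the multiplier `z · 1` of a central `z` symmetric. Hence a central element
is determined by a symmetric function.

For integrality, let `C` be the algebra generated by `σ₃^{±1}`, `qσ₁`, `qσ₂`, whose generators make
sense before inverting `q` and are central there. The `C`-module `L` spanned by
`1, qY₃, qY₂Y₃, qY₂, qY₁Y₃, q²Y₂Y₃²` is stable under the image of the integral form of `H`. Thus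
`z · 1 ∈ L` for `z` central in the integral form, and clearing the nonsymmetric terms of an
expansion of `z · 1` by comparing it with its images under transpositions leaves the coefficient
of `1`, which is in `C`.
-/

/-- The quadratic relation imposed on a generator of a Hecke algebra, in the form used in
`HeckeRel`. -/
def IsHeckeQuadratic {R A : Type*} [CommRing R] [Ring A] [Algebra R A] (q : R) (s : A) : Prop :=
  (s + 1) * (s - algebraMap R A q) = 0

/-- The element `q s⁻¹`, which for a Hecke generator `s` makes sense without inverting `q`. -/
def heckeBar {R A : Type*} [CommRing R] [Ring A] [Algebra R A] (q : R) (s : A) : A :=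
  s - algebraMap R A q + 1

section HeckeQuadratic

variable {R A B : Type*} [CommRing R] [Ring A] [Algebra R A] [Ring B] [Algebra R B]
  {q : R} {a b s : A}

theorem heckeBar_eq_sub_smul (q : R) (s : A) : heckeBar q s = s - (q - 1) • (1 : A) := by
  rw [heckeBar, Algebra.algebraMap_eq_smul_one, sub_smul, one_smul]
  abel

theorem map_heckeBar (f : A →ₐ[R] B) (q : R) (s : A) : f (heckeBar q s) = heckeBar q (f s) := by
  simp only [heckeBar, map_add, map_sub, AlgHom.commutes, map_one]

theorem heckeBar_cyclicSum_rotate (q : R) (a b c : A) :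
    heckeBar q c * heckeBar q a + heckeBar q a * b + b * c =
      heckeBar q a * heckeBar q b + heckeBar q b * c + c * a := by
  simp only [heckeBar_eq_sub_smul, mul_sub, sub_mul, mul_smul_comm, smul_mul_assoc, mul_one,
    one_mul]
  module

namespace IsHeckeQuadratic

theorem map (hs : IsHeckeQuadratic q s) (f : A →ₐ[R] B) : IsHeckeQuadratic q (f s) := by
  have := congrArg f hs
  rwa [map_mul, map_add, map_sub, AlgHom.commutes, map_one, map_zero] at this

theorem mul_self (hs : IsHeckeQuadratic q s) : s * s = (q - 1) • s + q • 1 := by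
  have h : (s + 1) * (s - q • (1 : A)) = 0 := by rwa [← Algebra.algebraMap_eq_smul_one]
  simp only [add_mul, mul_sub, mul_smul_comm, mul_one, one_mul] at h
  rw [← sub_eq_zero, ← h]
  module

theorem mul_bar (hs : IsHeckeQuadratic q s) : s * heckeBar q s = q • 1 := by
  rw [heckeBar_eq_sub_smul, mul_sub, hs.mul_self, mul_smul_comm, mul_one]
  abel

theorem bar_mul (hs : IsHeckeQuadratic q s) : heckeBar q s * s = q • 1 := by
  rw [heckeBar_eq_sub_smul, sub_mul, hs.mul_self, smul_mul_assoc, one_mul]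
  abel

theorem isUnit (hs : IsHeckeQuadratic q s) {qi : R} (hqi : q * qi = 1) : IsUnit s := by
  refine isUnit_iff_exists.mpr ⟨qi • heckeBar q s, ?_, ?_⟩
  · rw [mul_smul_comm, hs.mul_bar, smul_smul, mul_comm, hqi, one_smul]
  · rw [smul_mul_assoc, hs.bar_mul, smul_smul, mul_comm, hqi, one_smul]

theorem mul_eq_of_mul_mul_eq (hs : IsHeckeQuadratic q s) {qi : R} (hqi : q * qi = 1)
    (h : s * a * s = q • b) : s * a = b * s + (1 - q) • b := by
  calc s * a = qi • (s * a * s * heckeBar q s) := by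
        rw [mul_assoc _ s, hs.mul_bar, mul_smul_comm, mul_one, smul_smul, mul_comm, hqi, one_smul]
    _ = b * heckeBar q s := by
        rw [h, smul_mul_assoc, smul_smul, mul_comm, hqi, one_smul]
    _ = b * s + (1 - q) • b := by
        rw [heckeBar_eq_sub_smul, mul_sub, mul_smul_comm, mul_one]
        module

theorem mul_eq_of_mul_mul_eq' (hs : IsHeckeQuadratic q s) {qi : R} (hqi : q * qi = 1)
    (h : s * a * s = q • b) : s * b = a * s + (q - 1) • b := by
  calc s * b = qi • (s * s * a * s) := by
        rw [mul_assoc s, mul_assoc s, h, mul_smul_comm, smul_smul, mul_comm, hqi, one_smul]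
    _ = qi • ((q - 1) • (s * a * s) + q • (a * s)) := by
        rw [hs.mul_self]
        simp only [add_mul, smul_mul_assoc, one_mul]
    _ = a * s + (q - 1) • b := by
        rw [h, smul_comm (q - 1), ← smul_add, smul_smul, mul_comm, hqi, one_smul, add_comm]

theorem mul_bar_mul_bar (ha : IsHeckeQuadratic q a) (hb : IsHeckeQuadratic q b)
    (braid : a * b * a = b * a * b) :
    a * (heckeBar q b * heckeBar q a) = heckeBar q b * heckeBar q a * b := by
  simp only [heckeBar_eq_sub_smul, mul_sub, sub_mul, mul_smul_comm, smul_mul_assoc, mul_one,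
    one_mul, ← mul_assoc, braid, ha.mul_self, hb.mul_self]
  module

theorem bar_braid (ha : IsHeckeQuadratic q a) (hb : IsHeckeQuadratic q b)
    (braid : a * b * a = b * a * b) :
    heckeBar q a * heckeBar q b * heckeBar q a = heckeBar q b * heckeBar q a * heckeBar q b := by
  simp only [heckeBar_eq_sub_smul, mul_sub, sub_mul, mul_smul_comm, smul_mul_assoc, mul_one,
    one_mul, braid, ha.mul_self, hb.mul_self]
  module

theorem mul_cyclicSum (ha : IsHeckeQuadratic q a) (hb : IsHeckeQuadratic q b)
    (braid : a * b * a = b * a * b) (x : A) :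
    a * (heckeBar q a * x + x * b + b * a) = (heckeBar q a * x + x * b + b * a) * b := by
  have expand_left : a * (heckeBar q a * x + x * b + b * a) = q • x + a * x * b + b * a * b := by
    rw [mul_add, mul_add, ← mul_assoc, ha.mul_bar, smul_mul_assoc, one_mul, ← mul_assoc,
      ← mul_assoc, braid]
  rw [expand_left, add_mul, add_mul, mul_assoc x, hb.mul_self]
  simp only [heckeBar_eq_sub_smul, sub_mul, mul_add, mul_smul_comm, smul_mul_assoc, mul_one,
    one_mul]
  module

theorem mul_cyclicSum' (ha : IsHeckeQuadratic q a) (hb : IsHeckeQuadratic q b)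
    (braid : a * b * a = b * a * b) (x : A) :
    a * (heckeBar q b * heckeBar q a + heckeBar q a * x + x * b) =
      (heckeBar q b * heckeBar q a + heckeBar q a * x + x * b) * b := by
  rw [mul_add, mul_add, ha.mul_bar_mul_bar hb braid, ← mul_assoc a, ha.mul_bar, add_mul, add_mul,
    mul_assoc x, hb.mul_self]
  simp only [heckeBar_eq_sub_smul, sub_mul, mul_add, mul_smul_comm, smul_mul_assoc, mul_one,
    one_mul, mul_assoc]
  module

end IsHeckeQuadratic

end HeckeQuadratic

namespace HeckeAlg

section Structure

variable {R : Type} [CommRing R] {q : R}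

@[elab_as_elim]
theorem induction_on {motive : HeckeAlg R q → Prop} (x : HeckeAlg R q)
    (algebraMap : ∀ r, motive (algebraMap R _ r)) (gen : ∀ i, motive (gen R q i))
    (add : ∀ x y, motive x → motive y → motive (x + y))
    (mul : ∀ x y, motive x → motive y → motive (x * y)) : motive x := by
  obtain ⟨x, rfl⟩ := RingQuot.mkAlgHom_surjective R (HeckeRel R q) x
  induction x using FreeAlgebra.induction with
  | grade0 r => rw [AlgHom.commutes]; exact algebraMap r
  | grade1 i => exact gen i
  | mul x y hx hy => rw [map_mul]; exact mul _ _ hx hy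
  | add x y hx hy => rw [map_add]; exact add _ _ hx hy

theorem mem_of_gen_mem (B : Subring (HeckeAlg R q)) (halg : ∀ r, algebraMap R _ r ∈ B)
    (hgen : ∀ i, gen R q i ∈ B) (x : HeckeAlg R q) : x ∈ B :=
  induction_on x halg hgen (fun _ _ => B.add_mem) (fun _ _ => B.mul_mem)

section BaseChange

variable {S : Type} [CommRing S] {q' : S} (f : R →+* S) (h : f q = q')

theorem map_algebraMap (c : R) : map f q q' h (algebraMap R _ c) = algebraMap S _ (f c) := by
  subst h
  let : Algebra R (HeckeAlg S (f q)) :=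
    RingHom.toAlgebra' ((algebraMap S (HeckeAlg S (f q))).comp f)
      (fun c x => by simpa using Algebra.commutes (f c) x)
  have hc : algebraMap R (HeckeAlg R q) c =
      RingQuot.mkRingHom (HeckeRel R q) (algebraMap R (FreeAlgebra R (Fin 4)) c) := by
    rw [← RingQuot.mkAlgHom_coe R]
    exact (AlgHom.commutes _ _).symm
  rw [hc]
  exact (RingQuot.lift_mkRingHom_apply _ _ _).trans
    (AlgHom.commutes (FreeAlgebra.lift R fun i => gen S (f q) i) c)

theorem map_gen (i : Fin 4) : map f q q' h (gen R q i) = gen S q' i := by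
  subst h
  let : Algebra R (HeckeAlg S (f q)) :=
    RingHom.toAlgebra' ((algebraMap S (HeckeAlg S (f q))).comp f)
      (fun c x => by simpa using Algebra.commutes (f c) x)
  have hi : gen R q i = RingQuot.mkRingHom (HeckeRel R q) (FreeAlgebra.ι R i) := by
    rw [gen, ← RingQuot.mkAlgHom_coe R]
    rfl
  rw [hi]
  exact (RingQuot.lift_mkRingHom_apply _ _ _).trans (FreeAlgebra.lift_ι_apply _ _)

theorem map_heckeBar (x : HeckeAlg R q) :
    map f q q' h (heckeBar q x) = heckeBar q' (map f q q' h x) := by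
  rw [heckeBar, heckeBar, map_add, map_sub, map_algebraMap, map_one, h]

end BaseChange

/-- The generator `T`, as a unit. -/
noncomputable def unitT : (HeckeAlg R q)ˣ := ⟨T R q, Tinv R q, T_mul_Tinv R q, Tinv_mul_T R q⟩

/-- The rotation of the affine Dynkin diagram of type `A₂`: conjugation by `T`. -/
noncomputable def rot : HeckeAlg R q ≃ₐ[R] HeckeAlg R q :=
  MulSemiringAction.toAlgEquiv R _ (ConjAct.toConjAct (unitT (R := R) (q := q)))

/-- The third generator `T S₁ T⁻¹` of the affine Weyl part of the Hecke algebra. -/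
noncomputable def S0 : HeckeAlg R q := rot (S1 R q)

theorem rot_apply (x : HeckeAlg R q) : rot x = T R q * x * Tinv R q := rfl

theorem T_mul_eq_rot_mul (x : HeckeAlg R q) : T R q * x = rot x * T R q := by
  rw [rot_apply, mul_assoc _ (Tinv R q), Tinv_mul_T, mul_one]

theorem rot_S1 : rot (S1 R q) = S0 := rfl

theorem rot_S2 : rot (S2 R q) = S1 R q := by
  rw [rot_apply, T_mul_S2, mul_assoc, T_mul_Tinv, mul_one]

theorem S2_eq : S2 R q = Tinv R q * S1 R q * T R q := by
  rw [mul_assoc, ← T_mul_S2, ← mul_assoc, Tinv_mul_T, one_mul]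

theorem T_pow_mul_Tinv_pow (n : ℕ) : T R q ^ n * Tinv R q ^ n = 1 :=
  Units.mul_inv (unitT (q := q) ^ n)

theorem Tinv_eq : Tinv R q = Tinv R q ^ 3 * T R q ^ 2 := by
  rw [pow_succ', mul_assoc, show Tinv R q ^ 2 * T R q ^ 2 = 1 from Units.inv_mul (unitT ^ 2),
    mul_one]

theorem rot_S0 : rot (S0 : HeckeAlg R q) = S2 R q := by
  apply rot.injective
  calc rot (rot S0) = T R q ^ 3 * S1 R q * Tinv R q ^ 3 := by
        simp only [S0, rot_apply, pow_succ, pow_zero, one_mul, mul_assoc]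
    _ = S1 R q * (T R q ^ 3 * Tinv R q ^ 3) := by rw [T3_mul_S1, mul_assoc]
    _ = S1 R q := by rw [T_pow_mul_Tinv_pow, mul_one]
    _ = rot (S2 R q) := rot_S2.symm

theorem mem_center_of_commute {z : HeckeAlg R q} (hT : Commute (T R q) z)
    (hS1 : Commute (S1 R q) z) : z ∈ Subring.center (HeckeAlg R q) := by
  have commute_Tinv : Commute (Tinv R q) z := hT.units_inv_left (u := unitT)
  have commute_S2 : Commute (S2 R q) z := by
    rw [S2_eq]
    exact (commute_Tinv.mul_left hS1).mul_left hT
  have commute_gen (i : Fin 4) : Commute (gen R q i) z := by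
    fin_cases i
    exacts [hT, commute_Tinv, hS1, commute_S2]
  refine Subring.mem_center_iff.mpr fun x => ?_
  have hx : x ∈ Subring.centralizer {z} := by
    refine mem_of_gen_mem _ (fun r => ?_) (fun i => ?_) x
    · rintro _ rfl
      exact (Algebra.commutes r _).symm
    · rintro _ rfl
      exact (commute_gen i).symm
  exact (hx z rfl).symm

theorem T_cube_mem_center : T R q ^ 3 ∈ Subring.center (HeckeAlg R q) :=
  mem_center_of_commute (Commute.self_pow _ 3) (T3_mul_S1 R q).symm

theorem Tinv_cube_mem_center : Tinv R q ^ 3 ∈ Subring.center (HeckeAlg R q) :=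
  mem_center_of_commute (((Commute.refl (T R q)).units_inv_right (u := unitT)).pow_right 3)
    (Commute.units_inv_right (u := unitT ^ 3)
      (show Commute _ (T R q ^ 3) from (T3_mul_S1 R q).symm))

theorem quadratic_S1 : IsHeckeQuadratic q (S1 R q) := quad_rel R q

theorem quadratic_S0 : IsHeckeQuadratic q (S0 : HeckeAlg R q) := quadratic_S1.map rot.toAlgHom

theorem quadratic_S2 : IsHeckeQuadratic q (S2 R q) := by
  rw [← rot_S0]
  exact quadratic_S0.map rot.toAlgHom

theorem braid_S1_S0 : S1 R q * S0 * S1 R q = S0 * S1 R q * S0 := by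
  simpa only [map_mul, rot_S2, S0] using (congrArg rot (braid_rel R q)).symm

theorem braid_S0_S2 : S0 * S2 R q * S0 = S2 R q * S0 * S2 R q := by
  simpa only [map_mul, rot_S0, rot_S1] using congrArg rot (braid_S1_S0 (R := R) (q := q))

/-- The central element `q (Y₁ + Y₂ + Y₃)`, written without inverting `q`. -/
noncomputable def qSigma₁ : HeckeAlg R q :=
  (heckeBar q (S1 R q) * heckeBar q (S2 R q) + heckeBar q (S2 R q) * S0 + S0 * S1 R q) * T R q

/-- The central element `q (Y₁Y₂ + Y₂Y₃ + Y₁Y₃)`, written without inverting `q`. -/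
noncomputable def qSigma₂ : HeckeAlg R q :=
  (heckeBar q (S2 R q) * heckeBar q (S1 R q) + heckeBar q (S1 R q) * S0 + S0 * S2 R q) * T R q ^ 2

theorem rot_heckeBar (x : HeckeAlg R q) : rot (heckeBar q x) = heckeBar q (rot x) :=
  _root_.map_heckeBar rot.toAlgHom q x

theorem T_mul_S0 : T R q * S0 = S2 R q * T R q := by rw [T_mul_eq_rot_mul, rot_S0]

theorem S0_mul_T : S0 * T R q = T R q * S1 R q := (T_mul_eq_rot_mul _).symm

theorem S2_mul_T_sq : S2 R q * T R q ^ 2 = T R q ^ 2 * S1 R q := by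
  rw [pow_two, ← mul_assoc, ← T_mul_S0, mul_assoc, S0_mul_T, mul_assoc]

theorem qSigma₁_mem_center : qSigma₁ ∈ Subring.center (HeckeAlg R q) := by
  refine mem_center_of_commute ?_ ?_
  · refine Commute.mul_right ?_ (Commute.refl _)
    rw [commute_iff_eq, T_mul_eq_rot_mul]
    congr 1
    simp only [map_add, map_mul, rot_heckeBar, rot_S1, rot_S2, rot_S0]
    exact heckeBar_cyclicSum_rotate q _ _ _
  · rw [commute_iff_eq, qSigma₁, ← mul_assoc, quadratic_S1.mul_cyclicSum quadratic_S0 braid_S1_S0,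
      mul_assoc, S0_mul_T, mul_assoc]

theorem qSigma₂_mem_center : qSigma₂ ∈ Subring.center (HeckeAlg R q) := by
  refine mem_center_of_commute ?_ ?_
  · refine Commute.mul_right ?_ (Commute.self_pow _ 2)
    rw [commute_iff_eq, T_mul_eq_rot_mul]
    congr 1
    simp only [map_add, map_mul, rot_heckeBar, rot_S1, rot_S2, rot_S0]
    rw [heckeBar_cyclicSum_rotate, heckeBar_cyclicSum_rotate]
  · rw [commute_iff_eq, qSigma₂, ← mul_assoc, quadratic_S1.mul_cyclicSum' quadratic_S2
      (braid_rel R q), mul_assoc, S2_mul_T_sq, mul_assoc]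

section BaseChange

variable {S : Type} [CommRing S] {q' : S} (f : R →+* S) (h : f q = q')

theorem map_T : map f q q' h (T R q) = T S q' := map_gen f h 0

theorem map_Tinv : map f q q' h (Tinv R q) = Tinv S q' := map_gen f h 1

theorem map_S1 : map f q q' h (S1 R q) = S1 S q' := map_gen f h 2

theorem map_S2 : map f q q' h (S2 R q) = S2 S q' := map_gen f h 3

theorem map_mem_center {z : HeckeAlg R q} (hz : z ∈ Subring.center (HeckeAlg R q)) :
    map f q q' h z ∈ Subring.center (HeckeAlg S q') := by
  have hz' := Subring.mem_center_iff.mp hz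
  refine mem_center_of_commute ?_ ?_
  · rw [← map_T f h]
    exact Commute.map (hz' (T R q)) (map f q q' h)
  · rw [← map_S1 f h]
    exact Commute.map (hz' (S1 R q)) (map f q q' h)

theorem map_S0 : map f q q' h S0 = S0 := by
  rw [S0, S0, rot_apply, rot_apply, map_mul, map_mul, map_T, map_S1, map_Tinv]

theorem map_qSigma₁ : map f q q' h qSigma₁ = qSigma₁ := by
  simp only [qSigma₁, map_mul, map_add, map_heckeBar, map_T, map_S0, map_S1, map_S2]

theorem map_qSigma₂ : map f q q' h qSigma₂ = qSigma₂ := by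
  simp only [qSigma₂, map_mul, map_pow, map_add, map_heckeBar, map_T, map_S0, map_S1, map_S2]

end BaseChange

end Structure

end HeckeAlg

/-- The Bernstein presentation of the affine Hecke algebra of `GL₃`: two Hecke generators and a
commuting family `y`, related by `sᵢ yᵢ sᵢ = q yᵢ₊₁`. Only `y 2` is required to be invertible,
since the other two are then units as soon as `q` is. -/
structure BernsteinRelations {R A : Type*} [CommRing R] [Ring A] [Algebra R A] (q : R)
    (s₁ s₂ : A) (y : Fin 3 → A) : Prop where
  quadratic₁ : IsHeckeQuadratic q s₁
  quadratic₂ : IsHeckeQuadratic q s₂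
  braid : s₁ * s₂ * s₁ = s₂ * s₁ * s₂
  mul_y_mul₁ : s₁ * y 0 * s₁ = q • y 1
  mul_y_mul₂ : s₂ * y 1 * s₂ = q • y 2
  commute₁ : Commute s₁ (y 2)
  commute₂ : Commute s₂ (y 0)
  commute_y : ∀ i j, Commute (y i) (y j)
  isUnit_y : IsUnit (y 2)

namespace HeckeAlg

section Bernstein

variable {R : Type} [CommRing R] {q : R} (qi : R)

theorem Y_one : Y R q qi 1 = qi • (heckeBar q (S2 R q) * S0 * T R q) := by
  change algebraMap R _ qi * heckeBar q (S2 R q) * T R q * S1 R q = _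
  rw [mul_assoc, ← S0_mul_T, ← Algebra.smul_def, smul_mul_assoc, ← mul_assoc]

theorem Y_two : Y R q qi 2 = qi • (S0 * S1 R q * T R q) := by
  change algebraMap R _ qi * T R q * S1 R q * S2 R q = _
  rw [mul_assoc _ (T R q), ← S0_mul_T, mul_assoc, mul_assoc _ (T R q), T_mul_S2, ← mul_assoc S0,
    Algebra.smul_def]

variable {qi} (hqi : q * qi = 1)
include hqi

theorem Y_zero :
    Y R q qi 0 = qi • (heckeBar q (S1 R q) * heckeBar q (S2 R q) * T R q) := by
  change algebraMap R _ q * (algebraMap R _ qi * heckeBar q (S1 R q)) *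
    (algebraMap R _ qi * heckeBar q (S2 R q)) * T R q = _
  rw [← mul_assoc (algebraMap R _ q), ← map_mul, hqi, map_one, one_mul, ← Algebra.smul_def,
    mul_smul_comm, smul_mul_assoc]

theorem smul_esymm_one_Y : q • (Y R q qi 0 + Y R q qi 1 + Y R q qi 2) = qSigma₁ := by
  rw [Y_zero hqi, Y_one, Y_two, ← smul_add, ← smul_add, smul_smul, hqi, one_smul, qSigma₁, add_mul,
    add_mul]

omit hqi in
theorem mul_T_mul_mul_T (x y : HeckeAlg R q) : x * T R q * (y * T R q) = x * rot y * T R q ^ 2 := by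
  rw [mul_assoc, ← mul_assoc (T R q), T_mul_eq_rot_mul, pow_two]
  simp only [mul_assoc]

theorem smul_mul_T_mul_smul_mul_T {x y z : HeckeAlg R q} (hxy : x * rot y = q • z) :
    qi • (x * T R q) * (qi • (y * T R q)) = qi • (z * T R q ^ 2) := by
  rw [smul_mul_smul_comm, mul_T_mul_mul_T, hxy, smul_mul_assoc, smul_smul, mul_assoc, mul_comm qi q,
    hqi, mul_one]

theorem Y_zero_mul_Y_one :
    Y R q qi 0 * Y R q qi 1 = qi • (heckeBar q (S2 R q) * heckeBar q (S1 R q) * T R q ^ 2) := by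
  rw [Y_zero hqi, Y_one]
  apply smul_mul_T_mul_smul_mul_T hqi
  rw [map_mul, rot_heckeBar, rot_S2, rot_S0, ← mul_assoc,
    quadratic_S1.bar_braid quadratic_S2 (braid_rel R q), mul_assoc, quadratic_S2.bar_mul,
    mul_smul_comm, mul_one]

theorem Y_one_mul_Y_zero :
    Y R q qi 1 * Y R q qi 0 = qi • (heckeBar q (S2 R q) * heckeBar q (S1 R q) * T R q ^ 2) := by
  rw [Y_zero hqi, Y_one]
  apply smul_mul_T_mul_smul_mul_T hqi
  rw [map_mul, rot_heckeBar, rot_heckeBar, rot_S1, rot_S2, mul_assoc, ← mul_assoc S0,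
    quadratic_S0.mul_bar, smul_mul_assoc, one_mul, mul_smul_comm]

theorem Y_one_mul_Y_two : Y R q qi 1 * Y R q qi 2 = qi • (S0 * S2 R q * T R q ^ 2) := by
  rw [Y_one, Y_two]
  apply smul_mul_T_mul_smul_mul_T hqi
  rw [map_mul, rot_S0, rot_S1, mul_assoc, ← mul_assoc S0, braid_S0_S2, mul_assoc (S2 R q),
    ← mul_assoc, quadratic_S2.bar_mul, smul_mul_assoc, one_mul]

theorem Y_two_mul_Y_one : Y R q qi 2 * Y R q qi 1 = qi • (S0 * S2 R q * T R q ^ 2) := by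
  rw [Y_one, Y_two]
  apply smul_mul_T_mul_smul_mul_T hqi
  rw [map_mul, rot_heckeBar, rot_S2, rot_S0, mul_assoc, ← mul_assoc (S1 R q),
    quadratic_S1.mul_bar, smul_mul_assoc, one_mul, mul_smul_comm]

theorem Y_zero_mul_Y_two :
    Y R q qi 0 * Y R q qi 2 = qi • (heckeBar q (S1 R q) * S0 * T R q ^ 2) := by
  rw [Y_zero hqi, Y_two]
  apply smul_mul_T_mul_smul_mul_T hqi
  rw [map_mul, rot_S0, rot_S1, mul_assoc, ← mul_assoc _ (S2 R q), quadratic_S2.bar_mul,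
    smul_mul_assoc, one_mul, mul_smul_comm]

theorem Y_two_mul_Y_zero :
    Y R q qi 2 * Y R q qi 0 = qi • (heckeBar q (S1 R q) * S0 * T R q ^ 2) := by
  rw [Y_zero hqi, Y_two]
  apply smul_mul_T_mul_smul_mul_T hqi
  rw [map_mul, rot_heckeBar, rot_heckeBar, rot_S1, rot_S2, mul_assoc,
    quadratic_S1.mul_bar_mul_bar quadratic_S0 braid_S1_S0, ← mul_assoc, ← mul_assoc,
    quadratic_S0.mul_bar, smul_mul_assoc, one_mul, smul_mul_assoc]

theorem smul_esymm_two_Y :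
    q • (Y R q qi 0 * Y R q qi 1 + Y R q qi 1 * Y R q qi 2 + Y R q qi 0 * Y R q qi 2) =
      qSigma₂ := by
  rw [Y_zero_mul_Y_one hqi, Y_one_mul_Y_two hqi, Y_zero_mul_Y_two hqi, ← smul_add, ← smul_add,
    smul_smul, hqi, one_smul, qSigma₂, add_right_comm, add_mul, add_mul]

theorem Y_mul_Y_mul_Y : Y R q qi 0 * Y R q qi 1 * Y R q qi 2 = T R q ^ 3 := by
  have T_sq_mul : T R q ^ 2 * (S0 * S1 R q * T R q) = S1 R q * S2 R q * T R q ^ 3 := by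
    calc T R q ^ 2 * (S0 * S1 R q * T R q) = T R q * (T R q * S0) * S1 R q * T R q := by
          simp only [pow_two, mul_assoc]
      _ = T R q * S2 R q * (T R q * S1 R q) * T R q := by simp only [T_mul_S0, mul_assoc]
      _ = S1 R q * (T R q * S0) * T R q ^ 2 := by
          simp only [T_mul_S2, ← S0_mul_T, pow_two, mul_assoc]
      _ = S1 R q * S2 R q * T R q ^ 3 := by
          simp only [T_mul_S0, pow_succ, pow_zero, one_mul, mul_assoc]
  rw [Y_zero_mul_Y_one hqi, Y_two, smul_mul_smul_comm, mul_assoc _ (T R q ^ 2), T_sq_mul,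
    ← mul_assoc, mul_assoc _ (heckeBar q (S1 R q)), ← mul_assoc (heckeBar q (S1 R q)),
    quadratic_S1.bar_mul, smul_mul_assoc, one_mul, mul_smul_comm, quadratic_S2.bar_mul,
    smul_smul, smul_mul_assoc, one_mul, smul_smul,
    show qi * qi * (q * q) = 1 by linear_combination (q * qi + 1) * hqi, one_smul]

theorem commute_Y (i j : Fin 3) : Commute (Y R q qi i) (Y R q qi j) := by
  have c01 : Commute (Y R q qi 0) (Y R q qi 1) :=
    (Y_zero_mul_Y_one hqi).trans (Y_one_mul_Y_zero hqi).symm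
  have c12 : Commute (Y R q qi 1) (Y R q qi 2) :=
    (Y_one_mul_Y_two hqi).trans (Y_two_mul_Y_one hqi).symm
  have c02 : Commute (Y R q qi 0) (Y R q qi 2) :=
    (Y_zero_mul_Y_two hqi).trans (Y_two_mul_Y_zero hqi).symm
  fin_cases i <;> fin_cases j
  exacts [.refl _, c01, c02, c01.symm, .refl _, c12, c02.symm, c12.symm, .refl _]

theorem bernsteinRelations : BernsteinRelations q (S1 R q) (S2 R q) (Y R q qi) where
  quadratic₁ := quadratic_S1
  quadratic₂ := quadratic_S2
  braid := braid_rel R q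
  mul_y_mul₁ := by
    rw [Y_zero hqi, Y_one, mul_smul_comm, smul_mul_assoc, smul_comm q,
      mul_assoc (heckeBar q (S1 R q)), ← mul_assoc (S1 R q), quadratic_S1.mul_bar, smul_mul_assoc,
      one_mul, smul_mul_assoc, mul_assoc _ (T R q), ← S0_mul_T, ← mul_assoc]
  mul_y_mul₂ := by
    rw [Y_one, Y_two, mul_smul_comm, smul_mul_assoc, smul_comm q,
      mul_assoc (heckeBar q (S2 R q)), ← mul_assoc (S2 R q), quadratic_S2.mul_bar, smul_mul_assoc,
      one_mul, smul_mul_assoc, mul_assoc S0, T_mul_S2, ← mul_assoc]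
  commute₁ := by
    rw [Y_two]
    refine Commute.smul_right ?_ _
    rw [commute_iff_eq, ← mul_assoc, ← mul_assoc, braid_S1_S0, mul_assoc _ (T R q), ← S0_mul_T,
      ← mul_assoc]
  commute₂ := by
    rw [Y_zero hqi]
    refine Commute.smul_right ?_ _
    rw [commute_iff_eq, ← mul_assoc,
      quadratic_S2.mul_bar_mul_bar quadratic_S1 (braid_rel R q).symm, mul_assoc _ (T R q),
      T_mul_S2, ← mul_assoc]
  commute_y := commute_Y hqi
  isUnit_y := by
    have hc : Commute (Y R q qi 0 * Y R q qi 1) (Y R q qi 2) :=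
      (commute_Y hqi 0 2).mul_left (commute_Y hqi 1 2)
    refine (hc.isUnit_mul_iff.mp ?_).2
    rw [Y_mul_Y_mul_Y hqi]
    exact unitT.isUnit.pow 3

end Bernstein

end HeckeAlg

namespace BernsteinRelations

section Lift

variable {R A : Type*} [CommRing R] [Ring A] [Algebra R A] {q qi : R} {s₁ s₂ : A} {y : Fin 3 → A}
  (H : BernsteinRelations q s₁ s₂ y)

/-- The image of the generator `T`, solved from `Y₁ = q S₁⁻¹ S₂⁻¹ T`. -/
def translation (_H : BernsteinRelations q s₁ s₂ y) (qi : R) : A := qi • (s₂ * s₁ * y 0)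

include H

theorem translation_mul : H.translation qi * s₂ = s₁ * H.translation qi := by
  rw [translation, smul_mul_assoc, mul_smul_comm, mul_assoc, ← H.commute₂.eq, ← mul_assoc,
    ← mul_assoc, ← mul_assoc, H.braid]

variable (hqi : q * qi = 1)
include hqi

theorem y_one_eq : y 1 = qi • (s₁ * y 0 * s₁) := by
  rw [H.mul_y_mul₁, smul_smul, mul_comm, hqi, one_smul]

theorem y_two_eq : y 2 = qi • (s₂ * y 1 * s₂) := by
  rw [H.mul_y_mul₂, smul_smul, mul_comm, hqi, one_smul]

theorem translation_cube : H.translation qi ^ 3 = y 0 * y 1 * y 2 := by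
  have sq : H.translation qi * H.translation qi = qi • (s₁ * s₂ * (y 1 * y 0)) :=
    calc H.translation qi * H.translation qi
        = qi • qi • (s₂ * s₁ * (y 0 * s₂) * s₁ * y 0) := by
          simp only [translation, smul_mul_assoc, mul_smul_comm, mul_assoc]
      _ = qi • qi • (s₁ * s₂ * (s₁ * y 0 * s₁) * y 0) := by
          simp only [← H.commute₂.eq, ← mul_assoc, ← H.braid]
      _ = qi • (s₁ * s₂ * (y 1 * y 0)) := by
          rw [H.mul_y_mul₁, mul_smul_comm, smul_mul_assoc, smul_smul qi q, mul_comm, hqi, one_smul,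
            mul_assoc]
  calc H.translation qi ^ 3
      = qi • qi • (s₁ * (s₂ * y 1 * (y 0 * s₂)) * s₁ * y 0) := by
        rw [pow_succ, pow_two, sq, translation]
        simp only [smul_mul_assoc, mul_smul_comm, mul_assoc]
    _ = qi • qi • (s₁ * (s₂ * y 1 * s₂) * y 0 * s₁ * y 0) := by
        simp only [← H.commute₂.eq, ← mul_assoc]
    _ = qi • (y 2 * (s₁ * y 0 * s₁) * y 0) := by
        rw [H.mul_y_mul₂, mul_smul_comm, H.commute₁.eq]
        simp only [smul_mul_assoc, mul_assoc]
        rw [smul_smul qi q, mul_comm qi q, hqi, one_smul]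
    _ = y 2 * (y 1 * y 0) := by
        rw [H.mul_y_mul₁, mul_smul_comm, smul_mul_assoc, smul_smul, mul_comm, hqi, one_smul,
          mul_assoc]
    _ = y 0 * y 1 * y 2 := by
        rw [(H.commute_y 1 0).eq, (((H.commute_y 0 2).mul_left (H.commute_y 1 2))).eq]

theorem isUnit_translation : IsUnit (H.translation qi) := by
  obtain ⟨u₁, hu₁⟩ := H.quadratic₁.isUnit hqi
  obtain ⟨u₂, hu₂⟩ := H.quadratic₂.isUnit hqi
  have hu_q : IsUnit (algebraMap R A q) := (IsUnit.of_mul_eq_one _ hqi).map _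
  have hy₁ : IsUnit (y 1) := by
    rw [← Units.isUnit_mul_units _ u₂, ← Units.isUnit_units_mul u₂, ← mul_assoc, hu₂, H.mul_y_mul₂,
      Algebra.smul_def]
    exact hu_q.mul H.isUnit_y
  have hy₀ : IsUnit (y 0) := by
    rw [← Units.isUnit_mul_units _ u₁, ← Units.isUnit_units_mul u₁, ← mul_assoc, hu₁, H.mul_y_mul₁,
      Algebra.smul_def]
    exact hu_q.mul hy₁
  rw [← isUnit_pow_iff three_ne_zero, H.translation_cube hqi]
  exact (hy₀.mul hy₁).mul H.isUnit_y

theorem commute_s₁_translation_cube : Commute (H.translation qi ^ 3) s₁ := by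
  have h01 : Commute (y 0 * y 1) s₁ := by
    rw [commute_iff_eq]
    nth_rw 1 [(H.commute_y 0 1).eq]
    rw [H.y_one_eq hqi]
    simp only [smul_mul_assoc, mul_smul_comm, mul_assoc]
  rw [H.translation_cube hqi]
  exact h01.mul_left H.commute₁.symm

end Lift

section Presentation

variable {R : Type} {A : Type*} [CommRing R] [Ring A] [Algebra R A] {q qi : R} {s₁ s₂ : A}
  {y : Fin 3 → A} (H : BernsteinRelations q s₁ s₂ y) (hqi : q * qi = 1)

/-- The algebra homomorphism out of the Hecke algebra determined by elements satisfying the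
Bernstein relations; it maps `S₁, S₂, Y₁, Y₂, Y₃` to these elements. -/
noncomputable def lift : HeckeAlg R q →ₐ[R] A :=
  RingQuot.liftAlgHom R ⟨FreeAlgebra.lift R
    ![H.translation qi, Ring.inverse (H.translation qi), s₁, s₂], by
      intro a b hab
      induction hab with
      | TTinv => simpa using Ring.mul_inverse_cancel _ (H.isUnit_translation hqi)
      | TinvT => simpa using Ring.inverse_mul_cancel _ (H.isUnit_translation hqi)
      | quad => simpa [IsHeckeQuadratic] using H.quadratic₁
      | T3S1 => simpa using (H.commute_s₁_translation_cube hqi).eq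
      | braid => simpa using H.braid
      | TS2 => simpa using H.translation_mul⟩

theorem lift_gen (i : Fin 4) : H.lift hqi (HeckeAlg.gen R q i) =
    ![H.translation qi, Ring.inverse (H.translation qi), s₁, s₂] i := by
  simp only [lift, HeckeAlg.gen, RingQuot.liftAlgHom_mkAlgHom_apply, FreeAlgebra.lift_ι_apply]

theorem lift_T : H.lift hqi (HeckeAlg.T R q) = H.translation qi := H.lift_gen hqi 0

theorem lift_S1 : H.lift hqi (HeckeAlg.S1 R q) = s₁ := H.lift_gen hqi 2

theorem lift_S2 : H.lift hqi (HeckeAlg.S2 R q) = s₂ := H.lift_gen hqi 3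

theorem lift_Y (i : Fin 3) : H.lift hqi (HeckeAlg.Y R q qi i) = y i := by
  have hy₀ : H.lift hqi (HeckeAlg.Y R q qi 0) = y 0 := by
    rw [HeckeAlg.Y_zero hqi, map_smul, map_mul, map_mul, map_heckeBar, map_heckeBar, lift_T,
      lift_S1, lift_S2, translation, mul_smul_comm, ← mul_assoc, ← mul_assoc,
      mul_assoc _ (heckeBar q s₂), H.quadratic₂.bar_mul, mul_smul_comm, mul_one, smul_mul_assoc,
      H.quadratic₁.bar_mul, smul_mul_assoc, smul_mul_assoc, one_mul, smul_smul, smul_smul,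
      smul_smul, show qi * qi * q * q = 1 by linear_combination (q * qi + 1) * hqi, one_smul]
  have hy₁ : H.lift hqi (HeckeAlg.Y R q qi 1) = y 1 := by
    rw [(HeckeAlg.bernsteinRelations hqi).y_one_eq hqi, H.y_one_eq hqi]
    simp only [map_smul, map_mul, lift_S1, hy₀]
  have hy₂ : H.lift hqi (HeckeAlg.Y R q qi 2) = y 2 := by
    rw [(HeckeAlg.bernsteinRelations hqi).y_two_eq hqi, H.y_two_eq hqi]
    simp only [map_smul, map_mul, lift_S2, hy₁]
  fin_cases i
  exacts [hy₀, hy₁, hy₂]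

end Presentation

end BernsteinRelations

section CommutingAeval

variable {R A σ : Type*} [CommRing R] [Ring A] [Algebra R A] {y : σ → A}

open scoped IsMulCommutative in
/-- Evaluation of polynomials at a pairwise commuting family in a noncommutative algebra. -/
noncomputable def commAeval (y : σ → A) (h : ∀ i j, Commute (y i) (y j)) :
    MvPolynomial σ R →ₐ[R] A :=
  haveI := Algebra.isMulCommutative_adjoin R (s := Set.range y) (by
    rintro _ ⟨i, rfl⟩ _ ⟨j, rfl⟩
    exact h i j)
  (Algebra.adjoin R (Set.range y)).val.comp
    (MvPolynomial.aeval fun i => ⟨y i, Algebra.subset_adjoin ⟨i, rfl⟩⟩)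

@[simp]
theorem commAeval_X (h : ∀ i j, Commute (y i) (y j)) (i : σ) :
    commAeval (R := R) y h (MvPolynomial.X i) = y i := by
  simp [commAeval]

end CommutingAeval

section Stabilizer

variable {A M : Type*} [Ring A] [AddCommGroup M] [Module A M]

/-- The subring of the elements of `A` mapping an additive subgroup of an `A`-module into itself. -/
def moduleStabilizer (W : AddSubgroup M) : Subring A where
  carrier := {a | ∀ m ∈ W, a • m ∈ W}
  mul_mem' ha hb m hm := by rw [mul_smul]; exact ha _ (hb _ hm)
  one_mem' m hm := by rwa [one_smul]
  add_mem' ha hb m hm := by rw [add_smul]; exact W.add_mem (ha _ hm) (hb _ hm)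
  zero_mem' m _ := by rw [zero_smul]; exact W.zero_mem
  neg_mem' ha m hm := by rw [neg_smul]; exact W.neg_mem (ha _ hm)

end Stabilizer

theorem smul_mem_span_of_exchange {A M : Type*} [Ring A] [AddCommGroup M] [Module A M]
    {P : Subring A} {s : A} {V : Set M}
    (exchange : ∀ p ∈ P, ∃ a ∈ P, ∃ b ∈ P, s * p = a * s + b)
    (hV : ∀ v ∈ V, s • v ∈ Submodule.span P V) {m : M} (hm : m ∈ Submodule.span P V) :
    s • m ∈ Submodule.span P V := by
  induction hm using Submodule.span_induction with
  | mem v hv => exact hV v hv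
  | zero => rw [smul_zero]; exact zero_mem _
  | add m n _ _ hm hn => rw [smul_add]; exact add_mem hm hn
  | smul p m hm ih =>
    obtain ⟨a, ha, b, hb, hab⟩ := exchange p p.2
    rw [Subring.smul_def, ← mul_smul, hab, add_smul, mul_smul]
    exact add_mem (Submodule.smul_mem _ (⟨a, ha⟩ : P) ih) (Submodule.smul_mem _ (⟨b, hb⟩ : P) hm)

theorem exists_exchange_of_X {R A σ : Type*} [CommRing R] [Ring A] [Algebra R A]
    {φ : MvPolynomial σ R →ₐ[R] A} {s : A}
    (exchange : ∀ i, ∃ a b, s * φ (MvPolynomial.X i) = φ a * s + φ b) (p : MvPolynomial σ R) :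
    ∃ a b, s * φ p = φ a * s + φ b := by
  induction p using MvPolynomial.induction_on with
  | C r => exact ⟨MvPolynomial.C r, 0, by
      rw [MvPolynomial.algHom_C, map_zero, add_zero, Algebra.commutes]⟩
  | add p p' hp hp' =>
    obtain ⟨a, b, h⟩ := hp
    obtain ⟨a', b', h'⟩ := hp'
    refine ⟨a + a', b + b', ?_⟩
    simp only [map_add, mul_add, add_mul, h, h']
    abel
  | mul_X p i hp =>
    obtain ⟨a, b, h⟩ := hp
    obtain ⟨a', b', h'⟩ := exchange i
    refine ⟨a * a', a * b' + b * MvPolynomial.X i, ?_⟩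
    rw [map_mul, ← mul_assoc, h, add_mul, mul_assoc, h']
    simp only [map_add, map_mul, mul_add, mul_assoc, add_assoc]

namespace BernsteinRelations

section PBW

variable {R A : Type*} [CommRing R] [Ring A] [Algebra R A] {q qi : R} {s₁ s₂ : A} {y : Fin 3 → A}
  (H : BernsteinRelations q s₁ s₂ y)

/-- Evaluation of polynomials at the Bernstein elements. -/
noncomputable def polyHom : MvPolynomial (Fin 3) R →ₐ[R] A := commAeval y H.commute_y

@[simp]
theorem polyHom_X (i : Fin 3) : H.polyHom (MvPolynomial.X i) = y i := commAeval_X _ i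

/-- The standard basis elements of the finite Hecke algebra of type `A₂`. -/
def finiteBasis (_H : BernsteinRelations q s₁ s₂ y) : Fin 6 → A :=
  ![1, s₁, s₂, s₁ * s₂, s₂ * s₁, s₁ * s₂ * s₁]

/-- The left span of the finite Hecke algebra over the polynomials in the Bernstein elements. -/
noncomputable def pbwSpan : Submodule H.polyHom.range.toSubring A :=
  Submodule.span _ (Set.range H.finiteBasis)

theorem polyHom_mem_moduleStabilizer (p : MvPolynomial (Fin 3) R) :
    H.polyHom p ∈ moduleStabilizer H.pbwSpan.toAddSubgroup := fun _ hm =>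
  H.pbwSpan.smul_mem (⟨_, p, rfl⟩ : H.polyHom.range.toSubring) hm

theorem y_mem_moduleStabilizer (i : Fin 3) :
    y i ∈ moduleStabilizer H.pbwSpan.toAddSubgroup := by
  simpa using H.polyHom_mem_moduleStabilizer (.X i)

theorem algebraMap_mem_moduleStabilizer (r : R) :
    algebraMap R A r ∈ moduleStabilizer H.pbwSpan.toAddSubgroup := by
  simpa using H.polyHom_mem_moduleStabilizer (.C r)

theorem smul_mem_pbwSpan (r : R) {m : A} (hm : m ∈ H.pbwSpan) : r • m ∈ H.pbwSpan := by
  rw [Algebra.smul_def]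
  exact H.algebraMap_mem_moduleStabilizer r _ hm

theorem finiteBasis_mem_pbwSpan (i : Fin 6) : H.finiteBasis i ∈ H.pbwSpan :=
  Submodule.subset_span ⟨i, rfl⟩

theorem mem_moduleStabilizer_of_pairing {s : A} (hs : IsHeckeQuadratic q s)
    (exchange : ∀ i, ∃ a b, s * y i = H.polyHom a * s + H.polyHom b)
    (pairing : ∀ i, ∃ j, s * H.finiteBasis i = H.finiteBasis j ∨
      s * H.finiteBasis j = H.finiteBasis i) :
    s ∈ moduleStabilizer H.pbwSpan.toAddSubgroup := by
  refine fun m hm => smul_mem_span_of_exchange ?_ ?_ hm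
  · rintro _ ⟨p, rfl⟩
    obtain ⟨a, b, h⟩ := exists_exchange_of_X (φ := H.polyHom) (by simpa using exchange) p
    exact ⟨_, ⟨a, rfl⟩, _, ⟨b, rfl⟩, h⟩
  · rintro _ ⟨i, rfl⟩
    obtain ⟨j, hij | hji⟩ := pairing i
    · rw [smul_eq_mul, hij]
      exact H.finiteBasis_mem_pbwSpan j
    · rw [smul_eq_mul, ← hji, ← mul_assoc, hs.mul_self, add_mul, smul_mul_assoc, smul_mul_assoc,
        one_mul, hji]
      exact add_mem (H.smul_mem_pbwSpan _ (H.finiteBasis_mem_pbwSpan i))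
        (H.smul_mem_pbwSpan _ (H.finiteBasis_mem_pbwSpan j))

variable (hqi : q * qi = 1)
include hqi

theorem s₁_mem_moduleStabilizer : s₁ ∈ moduleStabilizer H.pbwSpan.toAddSubgroup := by
  refine H.mem_moduleStabilizer_of_pairing H.quadratic₁ (fun i => ?_) (fun i => ?_)
  · fin_cases i
    · exact ⟨.X 1, (1 - q) • .X 1, by
        simpa using H.quadratic₁.mul_eq_of_mul_mul_eq hqi H.mul_y_mul₁⟩
    · exact ⟨.X 0, (q - 1) • .X 1, by
        simpa using H.quadratic₁.mul_eq_of_mul_mul_eq' hqi H.mul_y_mul₁⟩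
    · exact ⟨.X 2, 0, by simpa using H.commute₁.eq⟩
  · have mul_one : s₁ * H.finiteBasis 0 = H.finiteBasis 1 := mul_one s₁
    have mul_s₂ : s₁ * H.finiteBasis 2 = H.finiteBasis 3 := rfl
    have mul_s₂s₁ : s₁ * H.finiteBasis 4 = H.finiteBasis 5 := (mul_assoc s₁ s₂ s₁).symm
    fin_cases i
    exacts [⟨1, .inl mul_one⟩, ⟨0, .inr mul_one⟩, ⟨3, .inl mul_s₂⟩, ⟨2, .inr mul_s₂⟩,
      ⟨5, .inl mul_s₂s₁⟩, ⟨4, .inr mul_s₂s₁⟩]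

theorem s₂_mem_moduleStabilizer : s₂ ∈ moduleStabilizer H.pbwSpan.toAddSubgroup := by
  refine H.mem_moduleStabilizer_of_pairing H.quadratic₂ (fun i => ?_) (fun i => ?_)
  · fin_cases i
    · exact ⟨.X 0, 0, by simpa using H.commute₂.eq⟩
    · exact ⟨.X 2, (1 - q) • .X 2, by
        simpa using H.quadratic₂.mul_eq_of_mul_mul_eq hqi H.mul_y_mul₂⟩
    · exact ⟨.X 1, (q - 1) • .X 2, by
        simpa using H.quadratic₂.mul_eq_of_mul_mul_eq' hqi H.mul_y_mul₂⟩
  · have mul_one : s₂ * H.finiteBasis 0 = H.finiteBasis 2 := mul_one s₂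
    have mul_s₁ : s₂ * H.finiteBasis 1 = H.finiteBasis 4 := rfl
    have mul_s₁s₂ : s₂ * H.finiteBasis 3 = H.finiteBasis 5 :=
      (mul_assoc s₂ s₁ s₂).symm.trans H.braid.symm
    fin_cases i
    exacts [⟨2, .inl mul_one⟩, ⟨4, .inl mul_s₁⟩, ⟨0, .inr mul_one⟩, ⟨5, .inl mul_s₁s₂⟩,
      ⟨1, .inr mul_s₁⟩, ⟨3, .inr mul_s₁s₂⟩]

theorem translation_mem_moduleStabilizer :
    H.translation qi ∈ moduleStabilizer H.pbwSpan.toAddSubgroup := by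
  rw [translation, Algebra.smul_def]
  exact mul_mem (H.algebraMap_mem_moduleStabilizer qi) (mul_mem (mul_mem
    (H.s₂_mem_moduleStabilizer hqi) (H.s₁_mem_moduleStabilizer hqi)) (H.y_mem_moduleStabilizer 0))

end PBW

end BernsteinRelations

namespace HeckeAlg

section PBW

variable {R : Type} [CommRing R] {q : R}

theorem exists_T_cube_pow_mul_mem (B : Subring (HeckeAlg R q)) (halg : ∀ r, algebraMap R _ r ∈ B)
    (hT : T R q ∈ B) (hS1 : S1 R q ∈ B) (hS2 : S2 R q ∈ B) (x : HeckeAlg R q) :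
    ∃ n : ℕ, (T R q ^ 3) ^ n * x ∈ B := by
  have hT3 (n : ℕ) : (T R q ^ 3) ^ n ∈ B := pow_mem (pow_mem hT 3) n
  have central (n : ℕ) (x : HeckeAlg R q) : x * (T R q ^ 3) ^ n = (T R q ^ 3) ^ n * x :=
    Subring.mem_center_iff.mp (pow_mem T_cube_mem_center n) x
  have of_mem {x : HeckeAlg R q} (hx : x ∈ B) : ∃ n : ℕ, (T R q ^ 3) ^ n * x ∈ B :=
    ⟨0, by rwa [pow_zero, one_mul]⟩
  induction x using induction_on with
  | algebraMap r => exact of_mem (halg r)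
  | gen i =>
    fin_cases i
    · exact of_mem hT
    · refine ⟨1, ?_⟩
      rw [pow_one, pow_succ, mul_assoc]
      exact (T_mul_Tinv R q) ▸ mul_mem (pow_mem hT 2) (one_mem _)
    · exact of_mem hS1
    · exact of_mem hS2
  | add x y hx hy =>
    obtain ⟨m, hm⟩ := hx
    obtain ⟨n, hn⟩ := hy
    refine ⟨m + n, ?_⟩
    rw [mul_add, pow_add]
    nth_rw 1 [← central]
    rw [mul_assoc, mul_assoc]
    exact add_mem (mul_mem (hT3 n) hm) (mul_mem (hT3 m) hn)
  | mul x y hx hy =>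
    obtain ⟨m, hm⟩ := hx
    obtain ⟨n, hn⟩ := hy
    refine ⟨m + n, ?_⟩
    rw [pow_add, mul_assoc, ← mul_assoc _ x, ← central n x, mul_assoc, ← mul_assoc]
    exact mul_mem hm hn

theorem translation_bernsteinRelations {qi : R} (hqi : q * qi = 1) :
    (bernsteinRelations hqi).translation qi = T R q := by
  rw [BernsteinRelations.translation, Y_zero hqi, mul_smul_comm, ← mul_assoc, ← mul_assoc,
    mul_assoc (S2 R q), quadratic_S1.mul_bar, mul_smul_comm, mul_one, smul_mul_assoc,
    quadratic_S2.mul_bar, smul_mul_assoc, smul_mul_assoc, one_mul, smul_smul, smul_smul, smul_smul,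
    show qi * qi * q * q = 1 by linear_combination (q * qi + 1) * hqi, one_smul]

theorem exists_T_cube_pow_mul_eq_sum {qi : R} (hqi : q * qi = 1) (x : HeckeAlg R q) :
    ∃ (n : ℕ) (c : Fin 6 → MvPolynomial (Fin 3) R), (T R q ^ 3) ^ n * x =
      ∑ i, (bernsteinRelations hqi).polyHom (c i) * (bernsteinRelations hqi).finiteBasis i := by
  let H := bernsteinRelations (R := R) hqi
  obtain ⟨n, hn⟩ := exists_T_cube_pow_mul_mem (moduleStabilizer H.pbwSpan.toAddSubgroup)
    H.algebraMap_mem_moduleStabilizer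
    (translation_bernsteinRelations hqi ▸ H.translation_mem_moduleStabilizer hqi)
    (H.s₁_mem_moduleStabilizer hqi) (H.s₂_mem_moduleStabilizer hqi) x
  have hmem : (T R q ^ 3) ^ n * x * 1 ∈ H.pbwSpan := hn 1 (H.finiteBasis_mem_pbwSpan 0)
  rw [mul_one] at hmem
  obtain ⟨c, hc⟩ := (Submodule.mem_span_range_iff_exists_fun _).mp hmem
  choose p hp using fun i => (c i).2
  refine ⟨n, p, hc.symm.trans (Finset.sum_congr rfl fun i _ => ?_)⟩
  rw [Subring.smul_def, smul_eq_mul, ← hp i]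
  rfl

end PBW

end HeckeAlg

section TwistedDifference

variable {S K : Type*} [CommRing S] [CommRing K] [Algebra S K]

/-- The Demazure–Lusztig operator `f ↦ k (f - s f) - f` attached to an automorphism `s` and a
coefficient `k`. -/
def demazureLusztig (s : K →ₐ[S] K) (k : K) : Module.End S K :=
  Algebra.lmul S K k * (1 - s.toLinearMap) - 1

variable {s s₁ s₂ : K →ₐ[S] K} {k k₁ k₂ : K} {q : S}

theorem demazureLusztig_apply (s : K →ₐ[S] K) (k f : K) :
    demazureLusztig s k f = k * (f - s f) - f := rfl

theorem demazureLusztig_mul_of_fixed {g : K} (hg : s g = g) (f : K) :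
    demazureLusztig s k (g * f) = g * demazureLusztig s k f := by
  simp only [demazureLusztig_apply, map_mul, hg]
  ring

theorem isHeckeQuadratic_demazureLusztig (hs : ∀ f, s (s f) = f)
    (hk : k + s k = 1 + algebraMap S K q) : IsHeckeQuadratic q (demazureLusztig s k) := by
  ext f
  simp only [Module.End.mul_apply, LinearMap.add_apply, LinearMap.sub_apply, Module.End.one_apply,
    demazureLusztig_apply, map_sub, map_mul, hs, LinearMap.zero_apply, Module.algebraMap_end_apply,
    Algebra.smul_def, AlgHom.commutes]
  linear_combination (k * (f - s f)) * hk

theorem demazureLusztig_mul {y : K} (hy : k * (y - s y) = y - algebraMap S K q * s y) (f : K) :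
    demazureLusztig s k (y * f) = s y * (demazureLusztig s k f + (1 - q) • f) := by
  simp only [demazureLusztig_apply, map_mul, Algebra.smul_def, map_sub, map_one]
  linear_combination f * hy

theorem demazureLusztig_mul_lmul_mul {y : K} (hs : ∀ f, s (s f) = f)
    (hk : k + s k = 1 + algebraMap S K q) (hy : k * (y - s y) = y - algebraMap S K q * s y) :
    demazureLusztig s k * Algebra.lmul S K y * demazureLusztig s k =
      q • Algebra.lmul S K (s y) := by
  ext f
  have quadratic := LinearMap.congr_fun (isHeckeQuadratic_demazureLusztig hs hk).mul_self f
  simp only [Module.End.mul_apply, LinearMap.add_apply, LinearMap.smul_apply, Module.End.one_apply,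
    Algebra.coe_lmul_eq_mul, LinearMap.mul_apply'] at quadratic ⊢
  rw [demazureLusztig_mul hy, quadratic]
  simp only [Algebra.smul_def, map_sub, map_one]
  ring

theorem demazureLusztig_braid (hs₁ : ∀ f, s₁ (s₁ f) = f) (hs₂ : ∀ f, s₂ (s₂ f) = f)
    (braid : ∀ f, s₁ (s₂ (s₁ f)) = s₂ (s₁ (s₂ f)))
    (hk₁ : k₁ + s₁ k₁ = 1 + algebraMap S K q) (hk₂ : k₂ + s₂ k₂ = 1 + algebraMap S K q)
    (hk : s₁ k₂ = s₂ k₁)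
    (cocycle : k₁ * k₂ + (1 + algebraMap S K q) * s₁ k₂ =
      s₁ k₂ * (k₁ + k₂) + algebraMap S K q) :
    demazureLusztig s₁ k₁ * demazureLusztig s₂ k₂ * demazureLusztig s₁ k₁ =
      demazureLusztig s₂ k₂ * demazureLusztig s₁ k₁ * demazureLusztig s₂ k₂ := by
  ext f
  have hk₁' : s₁ k₁ = 1 + algebraMap S K q - k₁ := by rw [← hk₁]; ring
  have hk₂' : s₂ k₂ = 1 + algebraMap S K q - k₂ := by rw [← hk₂]; ring
  have h₁ : s₁ (s₂ k₁) = k₂ := by rw [← hk, hs₁]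
  rw [hk] at cocycle
  simp only [Module.End.mul_apply, demazureLusztig_apply, map_sub, map_mul, hs₁, hs₂, hk, hk₁',
    hk₂', h₁, braid]
  linear_combination (k₁ * (f - s₁ f) - k₂ * (f - s₂ f)) * cocycle

end TwistedDifference

section RationalFunctions

/-- Rational functions in the variables `σ`. -/
abbrev MvRatFunc (σ S : Type*) [CommRing S] : Type _ := FractionRing (MvPolynomial σ S)

namespace MvRatFunc

variable {σ S : Type*} [CommRing S]

/-- The variables, as rational functions. -/
noncomputable def Y (i : σ) : MvRatFunc σ S := algebraMap (MvPolynomial σ S) _ (MvPolynomial.X i)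

/-- Permutation of the variables. -/
noncomputable def permute (e : Equiv.Perm σ) : MvRatFunc σ S ≃ₐ[S] MvRatFunc σ S :=
  IsFractionRing.algEquivOfAlgEquiv (MvPolynomial.renameEquiv S e)

@[simp]
theorem permute_Y (e : Equiv.Perm σ) (i : σ) : permute e (Y i : MvRatFunc σ S) = Y (e i) := by
  rw [Y, permute, IsFractionRing.algEquivOfAlgEquiv_algebraMap, MvPolynomial.renameEquiv_apply,
    MvPolynomial.rename_X, Y]

theorem algHom_ext {B : Type*} [Semiring B] [Algebra S B] {f g : MvRatFunc σ S →ₐ[S] B}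
    (h : ∀ i, f (Y i) = g (Y i)) : f = g :=
  IsLocalization.algHom_ext (nonZeroDivisors (MvPolynomial σ S)) (MvPolynomial.algHom_ext h)

theorem permute_permute (e e' : Equiv.Perm σ) (f : MvRatFunc σ S) :
    permute e (permute e' f) = permute (e * e') f :=
  DFunLike.congr_fun (algHom_ext (f := ((permute e).toAlgHom).comp (permute e').toAlgHom)
    (g := (permute (e * e')).toAlgHom) (by simp)) f

theorem permute_one (f : MvRatFunc σ S) : permute 1 f = f :=
  DFunLike.congr_fun (algHom_ext (f := (permute 1).toAlgHom) (g := AlgHom.id S _) (by simp)) f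

theorem permute_swap_swap [DecidableEq σ] (i j : σ) (f : MvRatFunc σ S) :
    permute (Equiv.swap i j) (permute (Equiv.swap i j) f) = f := by
  rw [permute_permute, Equiv.swap_mul_self, permute_one]

variable [IsDomain S] {i j l : σ} {q : S}

theorem Y_sub_algebraMap_mul_Y_ne_zero (hij : i ≠ j) (a : S) :
    (Y i - algebraMap S _ a * Y j : MvRatFunc σ S) ≠ 0 := by
  classical
  intro h
  rw [IsScalarTower.algebraMap_apply S (MvPolynomial σ S), Y, Y, ← map_mul, ← map_sub,
    FaithfulSMul.algebraMap_eq_zero_iff] at h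
  simpa [hij.symm] using congrArg (MvPolynomial.eval (Pi.single i 1)) h

theorem Y_sub_Y_ne_zero (hij : i ≠ j) : (Y i - Y j : MvRatFunc σ S) ≠ 0 := by
  simpa using Y_sub_algebraMap_mul_Y_ne_zero hij (1 : S)

/-- The coefficient `(Y i - q Y j) / (Y i - Y j)` of the Demazure–Lusztig operator exchanging the
variables `Y i` and `Y j`. -/
noncomputable def ratio (q : S) (i j : σ) : MvRatFunc σ S :=
  (Y i - algebraMap S _ q * Y j) / (Y i - Y j)

theorem ratio_ne_zero (hij : i ≠ j) : ratio q i j ≠ 0 :=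
  div_ne_zero (Y_sub_algebraMap_mul_Y_ne_zero hij q) (Y_sub_Y_ne_zero hij)

theorem permute_ratio (e : Equiv.Perm σ) (i j : σ) :
    permute e (ratio q i j) = ratio q (e i) (e j) := by
  simp only [ratio, map_div₀, map_sub, map_mul, permute_Y, AlgEquiv.commutes]

theorem ratio_mul_sub (hij : i ≠ j) :
    ratio q i j * (Y i - Y j) = Y i - algebraMap S _ q * Y j :=
  div_mul_cancel₀ _ (Y_sub_Y_ne_zero hij)

theorem ratio_add_ratio (hij : i ≠ j) : ratio q i j + ratio q j i = 1 + algebraMap S _ q := by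
  apply mul_right_cancel₀ (Y_sub_Y_ne_zero hij)
  linear_combination ratio_mul_sub (q := q) hij - ratio_mul_sub (q := q) hij.symm

theorem ratio_cocycle (hij : i ≠ j) (hjl : j ≠ l) (hil : i ≠ l) :
    ratio q i j * ratio q j l + (1 + algebraMap S _ q) * ratio q i l =
      ratio q i l * (ratio q i j + ratio q j l) + algebraMap S _ q := by
  have := Y_sub_Y_ne_zero (S := S) hij
  have := Y_sub_Y_ne_zero (S := S) hjl
  have := Y_sub_Y_ne_zero (S := S) hil
  simp only [ratio]
  field_simp
  ring

section Swap

variable [DecidableEq σ]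

/-- The Demazure–Lusztig operator exchanging the variables `Y i` and `Y j`. -/
noncomputable def heckeSwap (q : S) (i j : σ) : Module.End S (MvRatFunc σ S) :=
  demazureLusztig (permute (Equiv.swap i j)).toAlgHom (ratio q i j)

theorem isHeckeQuadratic_heckeSwap (hij : i ≠ j) : IsHeckeQuadratic q (heckeSwap q i j) :=
  isHeckeQuadratic_demazureLusztig (permute_swap_swap i j) <| by
    simpa [permute_ratio] using ratio_add_ratio hij

theorem heckeSwap_Y_left_mul (hij : i ≠ j) (f : MvRatFunc σ S) :
    heckeSwap q i j (Y i * f) = Y j * (heckeSwap q i j f + (1 - q) • f) := by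
  have hy : ratio q i j * (Y i - permute (Equiv.swap i j) (Y i)) =
      Y i - algebraMap S _ q * permute (Equiv.swap i j) (Y i) := by simp [ratio_mul_sub hij]
  simpa [heckeSwap] using demazureLusztig_mul (s := (permute (Equiv.swap i j)).toAlgHom) hy f

theorem heckeSwap_mul_lmul_Y_mul_heckeSwap (hij : i ≠ j) :
    heckeSwap q i j * Algebra.lmul S _ (Y i) * heckeSwap q i j = q • Algebra.lmul S _ (Y j) := by
  rw [heckeSwap, demazureLusztig_mul_lmul_mul (q := q) (permute_swap_swap i j)] <;>
    simp [ratio_mul_sub hij, permute_ratio, ratio_add_ratio hij]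

theorem heckeSwap_mul_of_fixed {g : MvRatFunc σ S} (hg : permute (Equiv.swap i j) g = g)
    (f : MvRatFunc σ S) : heckeSwap q i j (g * f) = g * heckeSwap q i j f :=
  demazureLusztig_mul_of_fixed hg f

theorem heckeSwap_braid (hij : i ≠ j) (hjl : j ≠ l) (hil : i ≠ l) :
    heckeSwap q i j * heckeSwap q j l * heckeSwap q i j =
      heckeSwap q j l * heckeSwap q i j * heckeSwap q j l := by
  have hjl_i : Equiv.swap j l i = i := Equiv.swap_apply_of_ne_of_ne hij hil
  have hij_l : Equiv.swap i j l = l := Equiv.swap_apply_of_ne_of_ne hil.symm hjl.symm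
  have braid : Equiv.swap i j * Equiv.swap j l * Equiv.swap i j =
      Equiv.swap j l * Equiv.swap i j * Equiv.swap j l := by
    rw [Equiv.swap_mul_swap_mul_swap hij hil, Equiv.swap_comm i j, Equiv.swap_comm j l,
      Equiv.swap_mul_swap_mul_swap hjl.symm hil.symm, Equiv.swap_comm]
  apply demazureLusztig_braid (permute_swap_swap i j) (permute_swap_swap j l) (q := q)
  · intro f
    simp [permute_permute, ← mul_assoc, braid]
  · simpa [permute_ratio] using ratio_add_ratio hij
  · simpa [permute_ratio] using ratio_add_ratio hjl
  · simp [permute_ratio, hjl_i, hij_l]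
  · simpa [permute_ratio, hij_l] using ratio_cocycle hij hjl hil

end Swap

end MvRatFunc
end RationalFunctions

namespace MvRatFunc

section Endomorphisms

variable {σ S : Type*} [CommRing S] [IsDomain S]

theorem linearIndependent_permute : LinearIndependent (MvRatFunc σ S)
    fun e : Equiv.Perm σ => (permute e : MvRatFunc σ S ≃ₐ[S] _).toAlgHom.toLinearMap := by
  refine (linearIndependent_toLinearMap S (MvRatFunc σ S) (MvRatFunc σ S)).comp
    (fun e : Equiv.Perm σ => (permute e).toAlgHom) fun e e' h => Equiv.ext fun i => ?_
  by_contra hi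
  refine Y_sub_Y_ne_zero (S := S) hi (sub_eq_zero.mpr ?_)
  simpa using DFunLike.congr_fun h (Y i)

theorem eq_lmul_of_commute_lmul_Y {D : Module.End S (MvRatFunc σ S)}
    (h : ∀ i, Commute D (Algebra.lmul S _ (Y i))) : D = Algebra.lmul S _ (D 1) := by
  have map_algebraMap_mul (p : MvPolynomial σ S) (f : MvRatFunc σ S) :
      D (algebraMap _ _ p * f) = algebraMap _ _ p * D f := by
    induction p using MvPolynomial.induction_on generalizing f with
    | C r =>
      rw [← MvPolynomial.algebraMap_eq, ← IsScalarTower.algebraMap_apply, ← Algebra.smul_def,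
        ← Algebra.smul_def, map_smul]
    | add p p' hp hp' => rw [map_add, add_mul, map_add, hp, hp', add_mul]
    | mul_X p i hp =>
      rw [map_mul (algebraMap _ _), mul_assoc, hp, mul_assoc]
      exact congrArg _ (LinearMap.congr_fun (h i) f)
  ext f
  obtain ⟨p, d, hd, rfl⟩ := IsFractionRing.div_surjective (A := MvPolynomial σ S) f
  have hd' : algebraMap _ (MvRatFunc σ S) d ≠ 0 :=
    IsFractionRing.to_map_ne_zero_of_mem_nonZeroDivisors hd
  apply mul_left_cancel₀ hd'
  rw [← map_algebraMap_mul, mul_div_cancel₀ _ hd', ← mul_one (algebraMap _ _ p), map_algebraMap_mul]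
  simp only [mul_one, Algebra.coe_lmul_eq_mul, LinearMap.mul_apply']
  field_simp

end Endomorphisms

section Representation

variable {S : Type} [CommRing S] [IsDomain S] {q qi : S}

theorem Y_ne_zero (i : Fin 3) : (Y i : MvRatFunc (Fin 3) S) ≠ 0 := by simp [Y]

theorem bernsteinRelations (q : S) :
    BernsteinRelations q (heckeSwap q (0 : Fin 3) 1) (heckeSwap q 1 2)
      fun i => Algebra.lmul S (MvRatFunc (Fin 3) S) (Y i) where
  quadratic₁ := isHeckeQuadratic_heckeSwap (by decide)
  quadratic₂ := isHeckeQuadratic_heckeSwap (by decide)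
  braid := heckeSwap_braid (by decide) (by decide) (by decide)
  mul_y_mul₁ := heckeSwap_mul_lmul_Y_mul_heckeSwap (by decide)
  mul_y_mul₂ := heckeSwap_mul_lmul_Y_mul_heckeSwap (by decide)
  commute₁ := LinearMap.ext <| heckeSwap_mul_of_fixed (permute_Y _ _)
  commute₂ := LinearMap.ext <| heckeSwap_mul_of_fixed (permute_Y _ _)
  commute_y i j := (Commute.all (Y i) (Y j)).map (Algebra.lmul S _)
  isUnit_y := (isUnit_iff_ne_zero.mpr (Y_ne_zero 2)).map (Algebra.lmul S _)

/-- The permutations of the variables, listed like `BernsteinRelations.finiteBasis`. -/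
def swapWord : Fin 6 → Equiv.Perm (Fin 3) :=
  ![1, Equiv.swap 0 1, Equiv.swap 1 2, Equiv.swap 0 1 * Equiv.swap 1 2,
    Equiv.swap 1 2 * Equiv.swap 0 1, Equiv.swap 0 1 * (Equiv.swap 1 2 * Equiv.swap 0 1)]

theorem swapWord_injective : Function.Injective swapWord := by decide

/-- The coefficients of `∑ n, c n * finiteBasis n` as a combination of permutations of the
variables. -/
noncomputable def swapCoeff (q : S) (c : Fin 6 → MvRatFunc (Fin 3) S) :
    Fin 6 → MvRatFunc (Fin 3) S :=
  let k := ratio q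
  ![c 0 + c 1 * (k 0 1 - 1) + c 2 * (k 1 2 - 1) + (c 3 + c 4) * (k 0 1 - 1) * (k 1 2 - 1) +
      c 5 * ((k 0 1 - 1) ^ 2 * (k 1 2 - 1) + k 0 1 * (k 0 2 - 1) * k 1 0),
    -k 0 1 * (c 1 + c 3 * (k 0 2 - 1) + c 4 * (k 1 2 - 1) +
      c 5 * ((k 0 1 - 1) * (k 1 2 - 1) + (k 0 2 - 1) * (k 1 0 - 1))),
    -k 1 2 * (c 2 + c 3 * (k 0 1 - 1) + c 4 * (k 0 2 - 1) + c 5 * (k 0 1 - 1) * (k 0 2 - 1)),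
    k 0 1 * k 0 2 * (c 3 + c 5 * (k 1 2 - 1)),
    k 1 2 * k 0 2 * (c 4 + c 5 * (k 0 1 - 1)),
    -k 0 1 * k 0 2 * k 1 2 * c 5]

theorem sum_lmul_mul_finiteBasis (q : S) (c : Fin 6 → MvRatFunc (Fin 3) S) :
    ∑ n, Algebra.lmul S _ (c n) * (bernsteinRelations q).finiteBasis n =
      ∑ n, swapCoeff q c n • (permute (swapWord n)).toAlgHom.toLinearMap := by
  ext f
  simp [Fin.sum_univ_six, BernsteinRelations.finiteBasis, swapCoeff, swapWord, heckeSwap,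
    demazureLusztig_apply, permute_ratio, permute_permute, permute_one, Equiv.swap_apply_def]
  ring

theorem eq_zero_of_swapCoeff_eq_zero {c : Fin 6 → MvRatFunc (Fin 3) S}
    (h : ∀ n, swapCoeff q c n = 0) (n : Fin 6) : c n = 0 := by
  have h₅ : c 5 = 0 := by simpa [swapCoeff, ratio_ne_zero] using h 5
  have h₄ : c 4 = 0 := by simpa [swapCoeff, ratio_ne_zero, h₅] using h 4
  have h₃ : c 3 = 0 := by simpa [swapCoeff, ratio_ne_zero, h₅] using h 3
  have h₂ : c 2 = 0 := by simpa [swapCoeff, ratio_ne_zero, h₅, h₄, h₃] using h 2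
  have h₁ : c 1 = 0 := by simpa [swapCoeff, ratio_ne_zero, h₅, h₄, h₃] using h 1
  have h₀ : c 0 = 0 := by simpa [swapCoeff, h₅, h₄, h₃, h₂, h₁] using h 0
  fin_cases n
  exacts [h₀, h₁, h₂, h₃, h₄, h₅]

theorem eq_zero_of_sum_lmul_mul_finiteBasis_eq_zero {c : Fin 6 → MvRatFunc (Fin 3) S}
    (h : ∑ n, Algebra.lmul S _ (c n) * (bernsteinRelations q).finiteBasis n = 0) (n : Fin 6) :
    c n = 0 := by
  rw [sum_lmul_mul_finiteBasis] at h
  exact eq_zero_of_swapCoeff_eq_zero (Fintype.linearIndependent_iff.mp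
    (linearIndependent_permute.comp swapWord swapWord_injective) _ h) n

/-- The polynomial representation of the affine Hecke algebra, extended to rational functions:
`S₁` and `S₂` act by Demazure–Lusztig operators and `Y₁, Y₂, Y₃` by multiplication. -/
noncomputable def rep (hqi : q * qi = 1) :
    HeckeAlg S q →ₐ[S] Module.End S (MvRatFunc (Fin 3) S) :=
  (bernsteinRelations q).lift hqi

variable (hqi : q * qi = 1)

theorem rep_S1 : rep hqi (HeckeAlg.S1 S q) = heckeSwap q 0 1 := BernsteinRelations.lift_S1 _ _

theorem rep_S2 : rep hqi (HeckeAlg.S2 S q) = heckeSwap q 1 2 := BernsteinRelations.lift_S2 _ _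

theorem rep_Y (i : Fin 3) : rep hqi (HeckeAlg.Y S q qi i) = Algebra.lmul S _ (Y i) :=
  BernsteinRelations.lift_Y _ _ i

theorem rep_polyHom (p : MvPolynomial (Fin 3) S) :
    rep hqi ((HeckeAlg.bernsteinRelations hqi).polyHom p) =
      Algebra.lmul S _ (algebraMap _ (MvRatFunc (Fin 3) S) p) :=
  DFunLike.congr_fun (MvPolynomial.algHom_ext
    (f := (rep hqi).comp (HeckeAlg.bernsteinRelations hqi).polyHom)
    (g := (Algebra.lmul S _).comp (IsScalarTower.toAlgHom S _ (MvRatFunc (Fin 3) S)))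
    fun i => by simp [rep_Y, Y]) p

theorem rep_finiteBasis (n : Fin 6) : rep hqi ((HeckeAlg.bernsteinRelations hqi).finiteBasis n) =
    (bernsteinRelations q).finiteBasis n := by
  fin_cases n <;> simp [BernsteinRelations.finiteBasis, rep_S1, rep_S2]

theorem rep_injective : Function.Injective (rep hqi) := by
  refine (injective_iff_map_eq_zero _).mpr fun x hx => ?_
  obtain ⟨n, c, hc⟩ := HeckeAlg.exists_T_cube_pow_mul_eq_sum hqi x
  have hsum := congrArg (rep hqi) hc
  rw [map_mul, hx, mul_zero, map_sum, eq_comm] at hsum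
  simp only [map_mul, rep_polyHom, rep_finiteBasis] at hsum
  have hc₀ (i : Fin 6) : c i = 0 := by
    simpa using eq_zero_of_sum_lmul_mul_finiteBasis_eq_zero hsum i
  have hT : IsUnit ((HeckeAlg.T S q ^ 3) ^ n) := (HeckeAlg.unitT.isUnit.pow 3).pow n
  rw [← hT.mul_right_eq_zero, hc]
  simp [hc₀]

end Representation

section Fixed

variable {σ S : Type*} [CommRing S] [IsDomain S] {i j l : σ} {q : S}

theorem eq_of_permute_add_mul_Y {e : Equiv.Perm σ} (hj : e j ≠ j) {m a b : MvRatFunc σ S}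
    (hm : permute e m = m) (ha : permute e a = a) (hb : permute e b = b) (h : m = a + b * Y j) :
    m = a := by
  have : b * (Y (e j) - Y j) = 0 := by
    have hm' := hm
    rw [h, map_add, map_mul, ha, hb, permute_Y] at hm'
    linear_combination hm'
  rw [h, (mul_eq_zero.mp this).resolve_right (Y_sub_Y_ne_zero hj), zero_mul, add_zero]

variable [DecidableEq σ]

theorem heckeSwap_one : heckeSwap q i j 1 = -1 := by
  simp [heckeSwap, demazureLusztig_apply]

theorem permute_eq_of_heckeSwap_eq_neg (hij : i ≠ j) {m : MvRatFunc σ S}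
    (hm : heckeSwap q i j m = -m) : permute (Equiv.swap i j) m = m := by
  have : ratio q i j * (m - permute (Equiv.swap i j) m) = 0 := by
    simpa [heckeSwap, demazureLusztig_apply] using hm
  rw [mul_eq_zero, or_iff_right (ratio_ne_zero hij), sub_eq_zero] at this
  exact this.symm

theorem heckeSwap_Y_right_mul (hij : i ≠ j) (m : MvRatFunc σ S) :
    heckeSwap q i j (Y j * m) = Y i * heckeSwap q i j m + (q - 1) • (Y j * m) := by
  have fixed : permute (Equiv.swap i j) (Y i + Y j : MvRatFunc σ S) = Y i + Y j := by
    simp [add_comm]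
  calc heckeSwap q i j (Y j * m)
      = heckeSwap q i j ((Y i + Y j) * m) - heckeSwap q i j (Y i * m) := by
        rw [← map_sub]; ring_nf
    _ = Y i * heckeSwap q i j m + (q - 1) • (Y j * m) := by
        rw [heckeSwap_mul_of_fixed fixed, heckeSwap_Y_left_mul hij]
        simp only [Algebra.smul_def, map_sub, map_one]
        ring

theorem heckeSwap_Y_left (hij : i ≠ j) : heckeSwap q i j (Y i) = -q • Y j := by
  rw [← mul_one (Y i), heckeSwap_Y_left_mul hij, heckeSwap_one]
  simp only [Algebra.smul_def, map_sub, map_neg, map_one]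
  ring

theorem heckeSwap_Y_right (hij : i ≠ j) : heckeSwap q i j (Y j) = (q - 1) • Y j - Y i := by
  rw [← mul_one (Y j), heckeSwap_Y_right_mul hij, heckeSwap_one, mul_one]
  ring

theorem heckeSwap_Y_mul_of_ne (hli : l ≠ i) (hlj : l ≠ j) (m : MvRatFunc σ S) :
    heckeSwap q i j (Y l * m) = Y l * heckeSwap q i j m :=
  heckeSwap_mul_of_fixed (by rw [permute_Y, Equiv.swap_apply_of_ne_of_ne hli hlj]) m

theorem heckeSwap_Y_of_ne (hli : l ≠ i) (hlj : l ≠ j) : heckeSwap q i j (Y l) = -Y l := by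
  rw [← mul_one (Y l), heckeSwap_Y_mul_of_ne hli hlj, heckeSwap_one, mul_neg]

end Fixed

section Lattice

variable {S : Type} [CommRing S] [IsDomain S] {q qi : S}

/-- Generators of the `lattice` of rational functions stable under the integral form of the affine
Hecke algebra. -/
noncomputable def latticeBasis (q : S) : Fin 6 → MvRatFunc (Fin 3) S :=
  ![1, q • Y 2, q • (Y 1 * Y 2), q • Y 1, q • (Y 0 * Y 2), q • q • (Y 1 * (Y 2 * Y 2))]

variable (hqi : q * qi = 1)

theorem smul_rep_T (m : MvRatFunc (Fin 3) S) :
    q • rep hqi (HeckeAlg.T S q) m = heckeSwap q 1 2 (heckeSwap q 0 1 (Y 0 * m)) := by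
  simp [rep, BernsteinRelations.lift_T, BernsteinRelations.translation, smul_smul, hqi]

theorem rep_T_cube_apply (m : MvRatFunc (Fin 3) S) :
    rep hqi (HeckeAlg.T S q ^ 3) m = Y 0 * Y 1 * Y 2 * m := by
  simp [← HeckeAlg.Y_mul_Y_mul_Y hqi, rep_Y, mul_assoc]

theorem rep_qSigma₁_apply (m : MvRatFunc (Fin 3) S) :
    rep hqi HeckeAlg.qSigma₁ m = q • (Y 0 + Y 1 + Y 2) * m := by
  simp [← HeckeAlg.smul_esymm_one_Y hqi, rep_Y, add_mul]

theorem rep_qSigma₂_apply (m : MvRatFunc (Fin 3) S) :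
    rep hqi HeckeAlg.qSigma₂ m = q • (Y 0 * Y 1 + Y 1 * Y 2 + Y 0 * Y 2) * m := by
  simp [← HeckeAlg.smul_esymm_two_Y hqi, rep_Y, add_mul, mul_assoc]

theorem rep_S1_latticeBasis (i : Fin 6) : rep hqi (HeckeAlg.S1 S q) (latticeBasis q i) =
    let v := latticeBasis q
    ![-v 0, -v 1, (q - 1) • v 2 - v 4, q • v 3 + v 1 - rep hqi HeckeAlg.qSigma₁ (v 0), -(q • v 2),
      q • v 5 - rep hqi HeckeAlg.qSigma₂ (v 1) + q • q • rep hqi (HeckeAlg.T S q ^ 3) (v 0)] i := by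
  fin_cases i <;>
  simp [-map_pow, latticeBasis, rep_S1, rep_qSigma₁_apply, rep_qSigma₂_apply, rep_T_cube_apply,
    heckeSwap_Y_left_mul, heckeSwap_Y_right_mul, heckeSwap_Y_mul_of_ne,
    heckeSwap_Y_right, heckeSwap_Y_of_ne, heckeSwap_one] <;>
  simp only [Algebra.smul_def, map_sub, map_one] <;>
  ring

theorem rep_T_one : rep hqi (HeckeAlg.T S q) 1 = q • Y 2 := by
  have hqi' : qi * q = 1 := by rw [mul_comm, hqi]
  calc rep hqi (HeckeAlg.T S q) 1 = qi • q • rep hqi (HeckeAlg.T S q) 1 := by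
        rw [smul_smul, hqi', one_smul]
    _ = qi • q • q • Y 2 := by
        rw [smul_rep_T, mul_one]
        simp [heckeSwap_Y_left]
    _ = q • Y 2 := by rw [smul_smul, hqi', one_smul]

theorem rep_T_latticeBasis (i : Fin 6) : rep hqi (HeckeAlg.T S q) (latticeBasis q i) =
    let v := latticeBasis q
    let w := rep hqi (HeckeAlg.T S q ^ 3)
    ![v 1, v 2, w (v 0), v 4, (q - 1) • w (v 0) + v 5, w (v 3) - (q - 1) • w (v 1)] i := by
  fin_cases i <;>
  simp [-map_pow, latticeBasis, rep_T_one, smul_rep_T, rep_T_cube_apply, heckeSwap_Y_left_mul,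
    heckeSwap_Y_right_mul, heckeSwap_Y_mul_of_ne, heckeSwap_Y_left, heckeSwap_Y_right,
    heckeSwap_Y_of_ne] <;>
  simp only [Algebra.smul_def, map_sub, map_one] <;>
  ring

end Lattice

end MvRatFunc

namespace HeckeAlg

section IntegralCenter

variable {R S : Type} [CommRing R] [CommRing S] (f : R →+* S) {q' : S}

/-- The `R`-subalgebra of `H_S` generated by `σ₃ = T³`, its inverse, `qσ₁` and `qσ₂`. -/
noncomputable def integralCenter (f : R →+* S) (q' : S) : Subring (HeckeAlg S q') :=
  Subring.closure ({T S q' ^ 3, Tinv S q' ^ 3, qSigma₁, qSigma₂} ∪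
    Set.range ((algebraMap S _).comp f))

theorem integralCenter_le_center : integralCenter f q' ≤ Subring.center (HeckeAlg S q') := by
  rw [integralCenter, Subring.closure_le, Set.union_subset_iff]
  constructor
  · rintro _ (rfl | rfl | rfl | rfl)
    exacts [T_cube_mem_center, Tinv_cube_mem_center, qSigma₁_mem_center, qSigma₂_mem_center]
  · rintro _ ⟨r, rfl⟩
    exact Subring.mem_center_iff.mpr fun x => (Algebra.commutes (f r) x).symm

theorem T_cube_mem_integralCenter : T S q' ^ 3 ∈ integralCenter f q' :=
  Subring.subset_closure (by simp)

theorem Tinv_cube_mem_integralCenter : Tinv S q' ^ 3 ∈ integralCenter f q' :=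
  Subring.subset_closure (by simp)

theorem qSigma₁_mem_integralCenter : qSigma₁ ∈ integralCenter f q' :=
  Subring.subset_closure (by simp)

theorem qSigma₂_mem_integralCenter : qSigma₂ ∈ integralCenter f q' :=
  Subring.subset_closure (by simp)

theorem algebraMap_mem_integralCenter (r : R) : algebraMap S _ (f r) ∈ integralCenter f q' :=
  Subring.subset_closure (Or.inr ⟨r, rfl⟩)

end IntegralCenter

end HeckeAlg

namespace MvRatFunc

open HeckeAlg (integralCenter)

section Center

variable {S : Type} [CommRing S] [IsDomain S] {q qi : S} (hqi : q * qi = 1) {x : HeckeAlg S q}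

theorem rep_eq_lmul_of_mem_center (hx : x ∈ Subring.center (HeckeAlg S q)) :
    rep hqi x = Algebra.lmul S _ (rep hqi x 1) := by
  refine eq_lmul_of_commute_lmul_Y fun i => ?_
  rw [← rep_Y hqi]
  exact Commute.map (Subring.mem_center_iff.mp hx _).symm (rep hqi)

theorem rep_apply_of_mem_center (hx : x ∈ Subring.center (HeckeAlg S q))
    (m : MvRatFunc (Fin 3) S) : rep hqi x m = rep hqi x 1 * m :=
  LinearMap.congr_fun (rep_eq_lmul_of_mem_center hqi hx) m

theorem eq_of_rep_one_eq {y : HeckeAlg S q} (hx : x ∈ Subring.center (HeckeAlg S q))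
    (hy : y ∈ Subring.center (HeckeAlg S q)) (h : rep hqi x 1 = rep hqi y 1) : x = y := by
  apply rep_injective hqi
  rw [rep_eq_lmul_of_mem_center hqi hx, rep_eq_lmul_of_mem_center hqi hy, h]

theorem permute_rep_one_of_rep_eq_heckeSwap (hx : x ∈ Subring.center (HeckeAlg S q))
    {s : HeckeAlg S q} {i j : Fin 3} (hij : i ≠ j) (hs : rep hqi s = heckeSwap q i j) :
    permute (Equiv.swap i j) (rep hqi x 1) = rep hqi x 1 := by
  refine permute_eq_of_heckeSwap_eq_neg (q := q) hij ?_
  calc heckeSwap q i j (rep hqi x 1) = rep hqi (s * x) 1 := by rw [map_mul, hs]; rfl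
    _ = rep hqi x (heckeSwap q i j 1) := by
      rw [Subring.mem_center_iff.mp hx s, map_mul, hs]; rfl
    _ = -rep hqi x 1 := by rw [heckeSwap_one, map_neg]

theorem permute_swap_zero_one_rep_one (hx : x ∈ Subring.center (HeckeAlg S q)) :
    permute (Equiv.swap 0 1) (rep hqi x 1) = rep hqi x 1 :=
  permute_rep_one_of_rep_eq_heckeSwap hqi hx (by decide) (rep_S1 hqi)

theorem permute_swap_one_two_rep_one (hx : x ∈ Subring.center (HeckeAlg S q)) :
    permute (Equiv.swap 1 2) (rep hqi x 1) = rep hqi x 1 :=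
  permute_rep_one_of_rep_eq_heckeSwap hqi hx (by decide) (rep_S2 hqi)

omit hqi in
theorem eq_coeff_zero_of_eq_sum_mul_latticeBasis {g : Fin 6 → MvRatFunc (Fin 3) S}
    {m : MvRatFunc (Fin 3) S} (hg₀₁ : ∀ i, permute (Equiv.swap 0 1) (g i) = g i)
    (hg₁₂ : ∀ i, permute (Equiv.swap 1 2) (g i) = g i) (hm₀₁ : permute (Equiv.swap 0 1) m = m)
    (hm₁₂ : permute (Equiv.swap 1 2) m = m) (h : m = ∑ i, g i * latticeBasis q i) : m = g 0 := by
  have h₁ : m = g 0 + q • g 1 * Y 2 + q • g 4 * (Y 0 + Y 1) * Y 2 := by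
    refine eq_of_permute_add_mul_Y (e := Equiv.swap 0 1) (j := 1)
      (b := q • (g 2 * Y 2 + g 3 - g 4 * Y 2) + q • q • g 5 * Y 2 ^ 2) (by decide) hm₀₁ ?_ ?_ ?_
    · simp [hg₀₁, add_comm (Y 1 : MvRatFunc (Fin 3) S), Equiv.swap_apply_of_ne_of_ne]
    · simp [hg₀₁, Equiv.swap_apply_of_ne_of_ne]
    · rw [h]
      simp [Fin.sum_univ_six, latticeBasis, Algebra.smul_def]
      ring
  have h₂ : m = g 0 + q • g 4 * (Y 1 * Y 2) := by
    refine eq_of_permute_add_mul_Y (e := Equiv.swap 1 2) (j := 2)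
      (b := q • g 1 + q • g 4 * Y 0) (by decide) hm₁₂ ?_ ?_ ?_
    · simp [hg₁₂, mul_comm (Y 1 : MvRatFunc (Fin 3) S)]
    · simp [hg₁₂, Equiv.swap_apply_of_ne_of_ne]
    · rw [h₁]; ring
  refine eq_of_permute_add_mul_Y (e := Equiv.swap 0 1) (j := 1) (b := q • g 4 * Y 2)
    (by decide) hm₀₁ (hg₀₁ 0) ?_ ?_
  · simp [hg₀₁, Equiv.swap_apply_of_ne_of_ne]
  · rw [h₂]; ring

end Center

section Lattice

variable {R S : Type} [CommRing R] [CommRing S] [IsDomain S] (f : R →+* S) {q : R} {q' qi : S}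
  (h : f q = q') (hqi : q' * qi = 1)

/-- The span of `latticeBasis` over the symmetric functions that `HeckeAlg.integralCenter` acts
by. -/
noncomputable def lattice : Submodule ((integralCenter f q').map (rep hqi).toRingHom)
    (MvRatFunc (Fin 3) S) :=
  Submodule.span _ (Set.range (latticeBasis q'))

variable {f}

theorem latticeBasis_mem_lattice (i : Fin 6) : latticeBasis q' i ∈ lattice f hqi :=
  Submodule.subset_span ⟨i, rfl⟩

variable {hqi}

theorem rep_mem_lattice {c : HeckeAlg S q'} (hc : c ∈ integralCenter f q')
    {m : MvRatFunc (Fin 3) S} (hm : m ∈ lattice f hqi) : rep hqi c m ∈ lattice f hqi :=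
  (lattice f hqi).smul_mem ⟨rep hqi c, c, hc, rfl⟩ hm

theorem smul_mem_lattice (r : R) {m : MvRatFunc (Fin 3) S} (hm : m ∈ lattice f hqi) :
    f r • m ∈ lattice f hqi := by
  simpa using rep_mem_lattice (HeckeAlg.algebraMap_mem_integralCenter f r) hm

theorem rep_mem_lattice_of_latticeBasis {x : HeckeAlg S q'}
    (hx : ∀ i, rep hqi x (latticeBasis q' i) ∈ lattice f hqi)
    {m : MvRatFunc (Fin 3) S} (hm : m ∈ lattice f hqi) : rep hqi x m ∈ lattice f hqi := by
  refine smul_mem_span_of_exchange (s := rep hqi x) ?_ ?_ hm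
  · rintro _ ⟨c, hc, rfl⟩
    refine ⟨_, ⟨c, hc, rfl⟩, 0, zero_mem _, ?_⟩
    rw [add_zero]
    exact Commute.map (Subring.mem_center_iff.mp (HeckeAlg.integralCenter_le_center f hc) x)
      (rep hqi)
  · rintro _ ⟨i, rfl⟩
    exact hx i

section Parameter

include h

theorem param_smul_mem_lattice {m : MvRatFunc (Fin 3) S} (hm : m ∈ lattice f hqi) :
    q' • m ∈ lattice f hqi := by
  subst h
  exact smul_mem_lattice q hm

theorem param_sub_one_smul_mem_lattice {m : MvRatFunc (Fin 3) S} (hm : m ∈ lattice f hqi) :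
    (q' - 1) • m ∈ lattice f hqi := by
  rw [sub_smul, one_smul]
  exact sub_mem (param_smul_mem_lattice h hm) hm

theorem rep_T_mem_lattice {m : MvRatFunc (Fin 3) S} (hm : m ∈ lattice f hqi) :
    rep hqi (HeckeAlg.T S q') m ∈ lattice f hqi := by
  refine rep_mem_lattice_of_latticeBasis (fun i => ?_) hm
  have hv := latticeBasis_mem_lattice (f := f) hqi
  have hw := fun i => rep_mem_lattice (HeckeAlg.T_cube_mem_integralCenter f) (hv i)
  rw [rep_T_latticeBasis]
  fin_cases i
  exacts [hv 1, hv 2, hw 0, hv 4, add_mem (param_sub_one_smul_mem_lattice h (hw 0)) (hv 5),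
    sub_mem (hw 3) (param_sub_one_smul_mem_lattice h (hw 1))]

theorem rep_S1_mem_lattice {m : MvRatFunc (Fin 3) S} (hm : m ∈ lattice f hqi) :
    rep hqi (HeckeAlg.S1 S q') m ∈ lattice f hqi := by
  refine rep_mem_lattice_of_latticeBasis (fun i => ?_) hm
  have hv := latticeBasis_mem_lattice (f := f) hqi
  have hw := rep_mem_lattice (HeckeAlg.T_cube_mem_integralCenter f) (hv 0)
  have hσ₁ := rep_mem_lattice (HeckeAlg.qSigma₁_mem_integralCenter f) (hv 0)
  have hσ₂ := rep_mem_lattice (HeckeAlg.qSigma₂_mem_integralCenter f) (hv 1)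
  rw [rep_S1_latticeBasis]
  fin_cases i
  exacts [neg_mem (hv 0), neg_mem (hv 1),
    sub_mem (param_sub_one_smul_mem_lattice h (hv 2)) (hv 4),
    sub_mem (add_mem (param_smul_mem_lattice h (hv 3)) (hv 1)) hσ₁,
    neg_mem (param_smul_mem_lattice h (hv 2)),
    add_mem (sub_mem (param_smul_mem_lattice h (hv 5)) hσ₂)
      (param_smul_mem_lattice h (param_smul_mem_lattice h hw))]

theorem rep_Tinv_mem_lattice {m : MvRatFunc (Fin 3) S} (hm : m ∈ lattice f hqi) :
    rep hqi (HeckeAlg.Tinv S q') m ∈ lattice f hqi := by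
  rw [HeckeAlg.Tinv_eq, map_mul, pow_two, map_mul]
  exact rep_mem_lattice (HeckeAlg.Tinv_cube_mem_integralCenter f)
    (rep_T_mem_lattice h (rep_T_mem_lattice h hm))

theorem rep_S2_mem_lattice {m : MvRatFunc (Fin 3) S} (hm : m ∈ lattice f hqi) :
    rep hqi (HeckeAlg.S2 S q') m ∈ lattice f hqi := by
  rw [HeckeAlg.S2_eq, map_mul, map_mul]
  exact rep_Tinv_mem_lattice h (rep_S1_mem_lattice h (rep_T_mem_lattice h hm))

end Parameter

theorem rep_map_mem_lattice (x : HeckeAlg R q) {m : MvRatFunc (Fin 3) S}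
    (hm : m ∈ lattice f hqi) : rep hqi (HeckeAlg.map f q q' h x) m ∈ lattice f hqi := by
  induction x using HeckeAlg.induction_on generalizing m with
  | algebraMap r =>
    rw [HeckeAlg.map_algebraMap]
    exact rep_mem_lattice (HeckeAlg.algebraMap_mem_integralCenter f r) hm
  | gen i =>
    rw [HeckeAlg.map_gen]
    fin_cases i
    exacts [rep_T_mem_lattice h hm, rep_Tinv_mem_lattice h hm, rep_S1_mem_lattice h hm,
      rep_S2_mem_lattice h hm]
  | add x y hx hy =>
    rw [map_add, map_add]
    exact add_mem (hx hm) (hy hm)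
  | mul x y hx hy =>
    rw [map_mul, map_mul]
    exact hx (hy hm)

theorem mem_integralCenter_of_rep_one_mem_lattice {x : HeckeAlg S q'}
    (hx : x ∈ Subring.center (HeckeAlg S q')) (hm : rep hqi x 1 ∈ lattice f hqi) :
    x ∈ integralCenter f q' := by
  obtain ⟨c, hc⟩ := (Submodule.mem_span_range_iff_exists_fun _).mp hm
  choose d hd hdc using fun i => (c i).2
  have hd_center (i) : d i ∈ Subring.center (HeckeAlg S q') :=
    HeckeAlg.integralCenter_le_center f (hd i)
  have rep_one_eq : rep hqi x 1 = rep hqi (d 0) 1 := by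
    refine eq_coeff_zero_of_eq_sum_mul_latticeBasis (q := q') (g := fun i => rep hqi (d i) 1)
      (fun i => permute_swap_zero_one_rep_one hqi (hd_center i))
      (fun i => permute_swap_one_two_rep_one hqi (hd_center i))
      (permute_swap_zero_one_rep_one hqi hx) (permute_swap_one_two_rep_one hqi hx) ?_
    rw [← hc]
    refine Finset.sum_congr rfl fun i _ => ?_
    rw [← rep_apply_of_mem_center hqi (hd_center i), Subring.smul_def, ← hdc]
    rfl
  exact eq_of_rep_one_eq hqi hx (hd_center 0) rep_one_eq ▸ hd 0

end Lattice

end MvRatFunc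

namespace HeckeAlg

section CenterImage

variable {R S : Type} [CommRing R] [CommRing S] {f : R →+* S} {q : R} {q' : S} (h : f q = q')

theorem integralCenter_le_map_center :
    integralCenter f q' ≤ (Subring.center (HeckeAlg R q)).map (map f q q' h) := by
  rw [integralCenter, Subring.closure_le, Set.union_subset_iff]
  constructor
  · rintro _ (rfl | rfl | rfl | rfl)
    · exact ⟨_, T_cube_mem_center, by rw [map_pow, map_T]⟩
    · exact ⟨_, Tinv_cube_mem_center, by rw [map_pow, map_Tinv]⟩
    · exact ⟨_, qSigma₁_mem_center, map_qSigma₁ f h⟩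
    · exact ⟨_, qSigma₂_mem_center, map_qSigma₂ f h⟩
  · rintro _ ⟨r, rfl⟩
    exact ⟨_, Subring.mem_center_iff.mpr fun x => (Algebra.commutes r x).symm, map_algebraMap f h r⟩

theorem map_center_eq_integralCenter [IsDomain S] {qi : S} (hqi : q' * qi = 1) :
    (Subring.center (HeckeAlg R q)).map (map f q q' h) = integralCenter f q' := by
  refine le_antisymm ?_ (integralCenter_le_map_center h)
  rintro _ ⟨x, hx, rfl⟩
  refine MvRatFunc.mem_integralCenter_of_rep_one_mem_lattice (hqi := hqi)
    (map_mem_center f h hx) ?_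
  exact MvRatFunc.rep_map_mem_lattice h x (MvRatFunc.latticeBasis_mem_lattice hqi 0)

end CenterImage

end HeckeAlg

open HeckeAlg (Y) in
theorem statement1_general {R S : Type} [CommRing R] [CommRing S] [IsDomain S] (f : R →+* S) {q : R}
    {q' qi : S} (h : f q = q') (hqi : q' * qi = 1) {w : HeckeAlg S q'}
    (hw : Y S q' qi 0 * Y S q' qi 1 * Y S q' qi 2 * w = 1) :
    (Subring.center (HeckeAlg R q)).map (HeckeAlg.map f q q' h) =
      Subring.closure
        ({Y S q' qi 0 * Y S q' qi 1 * Y S q' qi 2, w,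
          algebraMap S _ q' * (Y S q' qi 0 + Y S q' qi 1 + Y S q' qi 2),
          algebraMap S _ q' * (Y S q' qi 0 * Y S q' qi 1 + Y S q' qi 1 * Y S q' qi 2 +
            Y S q' qi 0 * Y S q' qi 2)} ∪ Set.range ((algebraMap S (HeckeAlg S q')).comp f)) := by
  rw [HeckeAlg.Y_mul_Y_mul_Y hqi] at hw ⊢
  have w_eq : w = HeckeAlg.Tinv S q' ^ 3 :=
    Units.eq_inv_of_mul_eq_one_left (u := HeckeAlg.unitT ^ 3) hw
  rw [w_eq, ← Algebra.smul_def, ← Algebra.smul_def, HeckeAlg.smul_esymm_one_Y hqi,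
    HeckeAlg.smul_esymm_two_Y hqi]
  exact HeckeAlg.map_center_eq_integralCenter h hqi

/-- The image under `ι` of the center of `H` equals the `ℤ[q]`-subalgebra of
`H_{ℤ[q^{±1}]}` generated by `σ_3`, `σ_3⁻¹`, `qσ_1` and `qσ_2`, where
`σ_1 = Y_1 + Y_2 + Y_3`, `σ_2 = Y_1Y_2 + Y_2Y_3 + Y_1Y_3` and `σ_3 = Y_1Y_2Y_3`.
Here `w` denotes the (two-sided) inverse `σ_3⁻¹`. -/
theorem statement1 (w : HLau)
    (hw : (YLau 0 * YLau 1 * YLau 2) * w = 1 ∧ w * (YLau 0 * YLau 1 * YLau 2) = 1) :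
    ιLau '' (Subring.center HPoly : Set HPoly) =
    (Subring.closure
      (({YLau 0 * YLau 1 * YLau 2, w,
         qLau * (YLau 0 + YLau 1 + YLau 2),
         qLau * (YLau 0 * YLau 1 + YLau 1 * YLau 2 + YLau 0 * YLau 2)} : Set HLau) ∪
        Set.range structZq) : Set HLau) := by
  have q_mul_inv :
      (LaurentPolynomial.T 1 * LaurentPolynomial.T (-1) : LaurentPolynomial ℤ) = 1 := by
    rw [← LaurentPolynomial.T_add, add_neg_cancel, LaurentPolynomial.T_zero]
  exact congrArg SetLike.coe
    (statement1_general Polynomial.toLaurent Polynomial.toLaurent_X q_mul_inv hw.1)
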